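/- arXiv:2411.05304 — 2 statements merged into one kernel-verified Lean document; each statement's English description precedes it below -/
import Mathlib

section
/- Let G* be a graph attaining the maximum spectral radius among all F-free graphs with m edges and no isolated vertices, where F is a 2-connected graph, and let u* be a vertex of G* with maximum Perron-vector entry. Then G* is connected, no vertex of V(G*) \ {u*} is a cut vertex of G*, and every vertex u ∉ N[u*] has degree at least 2. -/
open Matrix SimpleGraph

open Classical in
/-- The adjacency matrix of a simple graph over `ℝ`. -/
noncomputable def adjMat {V : Type} [Fintype V] (G : SimpleGraph V) : Matrix V V ℝ :=
  fun u v => if G.Adj u v then (1 : ℝ) else 0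

/-- `ρ` is the spectral radius (largest real eigenvalue) of the adjacency matrix of `G`. -/
def IsSpecRad {V : Type} [Fintype V] (G : SimpleGraph V) (ρ : ℝ) : Prop :=
  (∃ x : V → ℝ, x ≠ 0 ∧ adjMat G *ᵥ x = ρ • x) ∧
  ∀ μ : ℝ, (∃ x : V → ℝ, x ≠ 0 ∧ adjMat G *ᵥ x = μ • x) → μ ≤ ρ

/-- `G` contains a copy of `F` as a (not necessarily induced) subgraph. -/
def ContainsSub {α β : Type} (F : SimpleGraph α) (G : SimpleGraph β) : Prop :=
  ∃ f : F →g G, Function.Injective f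

/-- `F` is 2-connected: at least three vertices and deleting any single vertex leaves a
connected graph. -/
def TwoConnected {α : Type} [Fintype α] (F : SimpleGraph α) : Prop :=
  3 ≤ Fintype.card α ∧
  ∀ v : α, ((⊤ : F.Subgraph).deleteVerts {v}).coe.Connected

/-!
Suppose `G` splits as `R ⊔ K`, two edge-disjoint parts sharing at most one vertex `v`, where `K` is
nonempty and misses `u*`. Reattach `K` at `u*` by swapping `v` and `u*` inside `K`. The two parts
still share at most one vertex, so a copy of the 2-connected graph `F` would lie in one of them,
hence in `G`; the number of edges is unchanged; and the quadratic form of the adjacency matrix at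
the Perron vector does not decrease because `u*` carries the largest entry. By maximality the
Perron vector `x` is still an eigenvector for `ρ`. Comparing rows at `u*`, it vanishes at every new
neighbour of `u*`, and the eigenvalue equation there forces `x u* = 0`, a contradiction.
So every branch of `G` at a vertex other than `u*` contains `u*`, which is the theorem.
-/

section Matrix

variable {n : Type*} [Fintype n]

lemma mem_spectrum_iff_exists_mulVec_eq_smul [DecidableEq n] {k : Type*} [Field k]
    {A : Matrix n n k} {μ : k} : μ ∈ spectrum k A ↔ ∃ x : n → k, x ≠ 0 ∧ A *ᵥ x = μ • x := by
  rw [← Matrix.spectrum_toLin', ← Module.End.hasEigenvalue_iff_mem_spectrum]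
  constructor
  · intro h
    obtain ⟨x, hx⟩ := h.exists_hasEigenvector
    exact ⟨x, hx.2, by simpa using hx.apply_eq_smul⟩
  · rintro ⟨x, hx, hAx⟩
    exact Module.End.hasEigenvalue_of_hasEigenvector
      ⟨Module.End.mem_eigenspace_iff.2 (by simpa using hAx), hx⟩

open scoped MatrixOrder in
lemma dotProduct_mulVec_le_of_forall_mem_spectrum_le [DecidableEq n] {A : Matrix n n ℝ}
    (hA : A.IsHermitian) {ρ : ℝ} (hρ : ∀ μ ∈ spectrum ℝ A, μ ≤ ρ) (y : n → ℝ) :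
    y ⬝ᵥ A *ᵥ y ≤ ρ * (y ⬝ᵥ y) := by
  have hle : A ≤ algebraMap ℝ _ ρ := (le_algebraMap_iff_spectrum_le hA).2 hρ
  have hnonneg := (Matrix.le_iff.1 hle).dotProduct_mulVec_nonneg y
  simpa [Algebra.algebraMap_eq_smul_one, sub_mulVec, smul_mulVec, dotProduct_sub] using hnonneg

lemma dotProduct_comp_self_le {m : Type*} [Fintype m] {f : m → n} (hf : f.Injective) (y : n → ℝ) :
    (y ∘ f) ⬝ᵥ (y ∘ f) ≤ y ⬝ᵥ y := by
  classical
  calc ∑ i, y (f i) * y (f i) = ∑ j ∈ Finset.univ.image f, y j * y j := by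
        rw [Finset.sum_image hf.injOn]
    _ ≤ ∑ j, y j * y j :=
        Finset.sum_le_univ_sum_of_nonneg fun j ↦ mul_self_nonneg (y j)

lemma mulVec_eq_smul_of_forall_dotProduct_mulVec_le {A : Matrix n n ℝ} (hA : A.IsHermitian)
    {ρ : ℝ} (hle : ∀ y, y ⬝ᵥ A *ᵥ y ≤ ρ * (y ⬝ᵥ y)) {x : n → ℝ}
    (hx : ρ * (x ⬝ᵥ x) ≤ x ⬝ᵥ A *ᵥ x) : A *ᵥ x = ρ • x := by
  classical
  have hform (y : n → ℝ) :
      star y ⬝ᵥ (ρ • (1 : Matrix n n ℝ) - A) *ᵥ y = ρ * (y ⬝ᵥ y) - y ⬝ᵥ A *ᵥ y := by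
    simp [sub_mulVec, smul_mulVec, dotProduct_sub]
  have hpsd : (ρ • (1 : Matrix n n ℝ) - A).PosSemidef :=
    .of_dotProduct_mulVec_nonneg ((isHermitian_one.smul (.all ρ)).sub hA) fun y ↦ by
      rw [hform]
      exact sub_nonneg.2 (hle y)
  have hker := (hpsd.dotProduct_mulVec_zero_iff x).1 <| by
    rw [hform]
    exact sub_eq_zero.2 (hx.antisymm (hle x))
  simpa [sub_mulVec, smul_mulVec, sub_eq_zero, eq_comm] using hker

lemma nonneg_of_mulVec_eq_smul_of_nonneg {A : Matrix n n ℝ} (hA : ∀ i j, 0 ≤ A i j) {ρ : ℝ}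
    {x : n → ℝ} (hx : 0 ≤ x) (hx0 : x ≠ 0) (hAx : A *ᵥ x = ρ • x) : 0 ≤ ρ := by
  obtain ⟨i, hi⟩ := Function.ne_iff.1 hx0
  have hρx : 0 ≤ ρ * x i := by
    rw [← smul_eq_mul, ← Pi.smul_apply, ← hAx]
    exact dotProduct_nonneg_of_nonneg (hA i) hx
  exact nonneg_of_mul_nonneg_left hρx ((hx i).lt_of_ne' hi)

end Matrix

section Support

variable {V W : Type*}

lemma disjoint_of_subsingleton_support_inter {R K : SimpleGraph V}
    (hRK : (R.support ∩ K.support).Subsingleton) : Disjoint R K :=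
  SimpleGraph.disjoint_left.2 fun _ _ hR hK ↦
    hR.ne (hRK ⟨⟨_, hR⟩, ⟨_, hK⟩⟩ ⟨⟨_, hR.symm⟩, ⟨_, hK.symm⟩⟩)

lemma exists_mem_support_inter_subset_singleton {R K : SimpleGraph V}
    (hRK : (R.support ∩ K.support).Subsingleton) (hK : K ≠ ⊥) :
    ∃ v ∈ K.support, R.support ∩ K.support ⊆ {v} := by
  rcases hRK.eq_empty_or_singleton with h | ⟨v, h⟩
  · obtain ⟨v, w, hvw⟩ := ne_bot_iff_exists_adj.1 hK
    exact ⟨v, ⟨w, hvw⟩, by simp [h]⟩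
  · exact ⟨v, (h.symm.subset rfl).2, h.subset⟩

lemma mem_support_comap_equiv {K : SimpleGraph W} {e : V ≃ W} {a : V} :
    a ∈ (K.comap e).support ↔ e a ∈ K.support :=
  e.exists_congr_left.trans <| by simp [SimpleGraph.mem_support]

lemma support_inter_support_comap_swap_subset [DecidableEq V] {R K : SimpleGraph V} {u v : V}
    (hRK : R.support ∩ K.support ⊆ {v}) (hu : u ∉ K.support) :
    R.support ∩ (K.comap (Equiv.swap u v)).support ⊆ {u} := by
  rintro a ⟨haR, haK⟩
  rw [mem_support_comap_equiv] at haK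
  by_contra hau
  have hav : a ≠ v := by
    rintro rfl
    exact hu (by simpa using haK)
  rw [Equiv.swap_apply_of_ne_of_ne hau hav] at haK
  exact hav (hRK ⟨haR, haK⟩)

lemma ncard_edgeSet_sup [Finite V] {R K : SimpleGraph V} (h : Disjoint R K) :
    (R ⊔ K).edgeSet.ncard = R.edgeSet.ncard + K.edgeSet.ncard := by
  rw [edgeSet_sup, Set.ncard_union_eq (disjoint_edgeSet.2 h)]

lemma ncard_edgeSet_comap_equiv (K : SimpleGraph W) (e : V ≃ W) :
    (K.comap e).edgeSet.ncard = K.edgeSet.ncard :=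
  Nat.card_congr (Iso.comap e K).mapEdgeSet

lemma ncard_edgeSet_induce_support [Finite V] (G : SimpleGraph V) :
    (G.induce G.support).edgeSet.ncard = G.edgeSet.ncard := by
  classical
  have := Fintype.ofFinite V
  simp only [← coe_edgeFinset, Set.ncard_coe_finset, card_edgeFinset_induce_support]

end Support

section Adjacency

variable {V W : Type} [Fintype V] [Fintype W]

lemma adjMat_eq_adjMatrix (G : SimpleGraph V) [DecidableRel G.Adj] :
    adjMat G = G.adjMatrix ℝ := by
  ext a b
  simp [adjMat, adjMatrix_apply]

lemma adjMat_nonneg (G : SimpleGraph V) (a b : V) : 0 ≤ adjMat G a b := by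
  unfold adjMat
  positivity

lemma isHermitian_adjMat (G : SimpleGraph V) : (adjMat G).IsHermitian := by
  classical
  rw [adjMat_eq_adjMatrix]
  exact G.isSymm_adjMatrix

lemma adjMat_sup {R K : SimpleGraph V} (h : Disjoint R K) :
    adjMat (R ⊔ K) = adjMat R + adjMat K := by
  ext a b
  have := SimpleGraph.disjoint_left.1 h a b
  by_cases hR : R.Adj a b <;> by_cases hK : K.Adj a b <;> simp_all [adjMat]

lemma adjMat_comap (K : SimpleGraph W) (f : V → W) :
    adjMat (K.comap f) = (adjMat K).submatrix f f :=
  rfl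

lemma adjMat_mulVec_apply_eq_zero {K : SimpleGraph V} {a : V} (ha : a ∉ K.support) (y : V → ℝ) :
    (adjMat K *ᵥ y) a = 0 :=
  Finset.sum_eq_zero fun b _ ↦ by
    simp [adjMat, show ¬ K.Adj a b from fun h ↦ ha ⟨b, h⟩]

lemma eq_zero_of_adjMat_mulVec_apply_eq_zero {K : SimpleGraph V} {x : V → ℝ} (hx : 0 ≤ x)
    {a b : V} (hab : K.Adj a b) (ha : (adjMat K *ᵥ x) a = 0) : x b = 0 := by
  have hterm := (Finset.sum_eq_zero_iff_of_nonneg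
    fun c _ ↦ mul_nonneg (adjMat_nonneg K a c) (hx c)).1 ha b (Finset.mem_univ b)
  simpa [adjMat, hab] using hterm

lemma dotProduct_adjMat_mulVec_mono {K : SimpleGraph V} {y z : V → ℝ} (hy : 0 ≤ y)
    (hyz : ∀ a ∈ K.support, y a ≤ z a) : y ⬝ᵥ adjMat K *ᵥ y ≤ z ⬝ᵥ adjMat K *ᵥ z := by
  simp only [dotProduct, mulVec, Finset.mul_sum]
  refine Finset.sum_le_sum fun a _ ↦ Finset.sum_le_sum fun b _ ↦ ?_
  by_cases hab : K.Adj a b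
  · have ha := hyz a ⟨b, hab⟩
    have hb := hyz b ⟨a, hab.symm⟩
    simpa [adjMat, hab] using mul_le_mul ha hb (hy b) ((hy a).trans ha)
  · simp [adjMat, hab]

lemma dotProduct_adjMat_comap_equiv_mulVec (K : SimpleGraph W) (e : V ≃ W) (y : V → ℝ) :
    y ⬝ᵥ adjMat (K.comap e) *ᵥ y = (y ∘ e.symm) ⬝ᵥ adjMat K *ᵥ (y ∘ e.symm) := by
  rw [adjMat_comap, submatrix_mulVec_equiv, comp_equiv_symm_dotProduct]

lemma dotProduct_adjMat_mulVec_le_comap_swap [DecidableEq V] {K : SimpleGraph V} {u v : V}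
    (hu : u ∉ K.support) {x : V → ℝ} (hx : 0 ≤ x) (hvu : x v ≤ x u) :
    x ⬝ᵥ adjMat K *ᵥ x ≤ x ⬝ᵥ adjMat (K.comap (Equiv.swap u v)) *ᵥ x := by
  rw [dotProduct_adjMat_comap_equiv_mulVec]
  refine dotProduct_adjMat_mulVec_mono hx fun a ha ↦ ?_
  have hau : a ≠ u := ne_of_mem_of_not_mem ha hu
  obtain rfl | hav := eq_or_ne a v
  · simpa using hvu
  · simp [Equiv.swap_apply_of_ne_of_ne hau hav]

lemma dotProduct_adjMat_sup_mulVec_le_sup_comap_swap [DecidableEq V] {R K : SimpleGraph V}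
    {u v : V} (hRK : Disjoint R K) (hRK' : Disjoint R (K.comap (Equiv.swap u v)))
    (hu : u ∉ K.support) {x : V → ℝ} (hx : 0 ≤ x) (hvu : x v ≤ x u) :
    x ⬝ᵥ adjMat (R ⊔ K) *ᵥ x ≤ x ⬝ᵥ adjMat (R ⊔ K.comap (Equiv.swap u v)) *ᵥ x := by
  simp only [adjMat_sup hRK, adjMat_sup hRK', add_mulVec, dotProduct_add]
  grw [dotProduct_adjMat_mulVec_le_comap_swap hu hx hvu]

lemma dotProduct_adjMat_induce_support_mulVec (G : SimpleGraph V) [Fintype G.support]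
    (y : V → ℝ) :
    (y ∘ Subtype.val) ⬝ᵥ adjMat (G.induce G.support) *ᵥ (y ∘ Subtype.val) =
      y ⬝ᵥ adjMat G *ᵥ y := by
  refine Fintype.sum_of_injective _ Subtype.val_injective _ _ (fun a ha ↦ ?_) fun a ↦ ?_
  · rw [adjMat_mulVec_apply_eq_zero (by simpa using ha), mul_zero]
  · congr 1
    refine Fintype.sum_of_injective _ Subtype.val_injective _ _ (fun b hb ↦ ?_) fun b ↦ rfl
    have hab : ¬ G.Adj a b := fun h ↦ hb ⟨⟨b, a, h.symm⟩, rfl⟩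
    simp [adjMat, hab]

end Adjacency

section SpectralRadius

variable {V : Type} [Fintype V] {G : SimpleGraph V}

lemma isSpecRad_iff_isGreatest_spectrum [DecidableEq V] {ρ : ℝ} :
    IsSpecRad G ρ ↔ IsGreatest (spectrum ℝ (adjMat G)) ρ := by
  simp only [IsSpecRad, IsGreatest, mem_upperBounds, mem_spectrum_iff_exists_mulVec_eq_smul]

lemma exists_isSpecRad [Nonempty V] (G : SimpleGraph V) : ∃ ρ, IsSpecRad G ρ := by
  classical
  simp only [isSpecRad_iff_isGreatest_spectrum]
  exact (ContinuousFunctionalCalculus.isCompact_spectrum _).exists_isGreatest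
    (ContinuousFunctionalCalculus.spectrum_nonempty _ (isHermitian_adjMat G))

lemma IsSpecRad.dotProduct_adjMat_mulVec_le {ρ : ℝ} (hρ : IsSpecRad G ρ) (y : V → ℝ) :
    y ⬝ᵥ adjMat G *ᵥ y ≤ ρ * (y ⬝ᵥ y) := by
  classical
  exact dotProduct_mulVec_le_of_forall_mem_spectrum_le (isHermitian_adjMat G)
    (isSpecRad_iff_isGreatest_spectrum.1 hρ).2 y

end SpectralRadius

section TwoConnected

variable {α V : Type}

lemma containsSub_iff_isContained {F : SimpleGraph α} {G : SimpleGraph V} :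
    ContainsSub F G ↔ F ⊑ G :=
  ⟨fun ⟨f, hf⟩ ↦ ⟨f.toCopy hf⟩, fun ⟨f⟩ ↦ ⟨f.toHom, f.injective⟩⟩

lemma forall_or_forall_not_of_preconnected {F : SimpleGraph α} (hF : F.Preconnected)
    {P : α → Prop} (hP : ∀ a b, F.Adj a b → P a → P b) : (∀ a, P a) ∨ ∀ a, ¬ P a := by
  by_contra! ⟨⟨b, hb⟩, a, ha⟩
  obtain ⟨p⟩ := hF a b
  obtain ⟨d, -, hd, hd'⟩ := p.exists_boundary_dart {c | P c} ha hb
  exact hd' (hP _ _ d.adj hd)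

variable [Fintype α] {F : SimpleGraph α}

lemma TwoConnected.forall_ne_or_forall_ne_not (hF : TwoConnected F) (a : α) {P : α → Prop}
    (hP : ∀ c d, c ≠ a → d ≠ a → F.Adj c d → P c → P d) :
    (∀ c ≠ a, P c) ∨ ∀ c ≠ a, ¬ P c := by
  have hdich := forall_or_forall_not_of_preconnected (hF.2 a).preconnected
    (P := fun c ↦ P c) fun c d hcd ↦
      hP c d (by simpa using c.2) (by simpa using d.2) (Subgraph.coe_adj_sub _ _ _ hcd)
  simpa using hdich

lemma TwoConnected.isContained_or_isContained_of_sup (hF : TwoConnected F) {R K : SimpleGraph V}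
    (hRK : (R.support ∩ K.support).Subsingleton) (h : F ⊑ R ⊔ K) : F ⊑ R ∨ F ⊑ K := by
  obtain ⟨f⟩ := h
  have hα : Nonempty α := Fintype.card_pos_iff.1 (by have := hF.1; omega)
  obtain ⟨a, ha⟩ : ∃ a, ∀ c ≠ a, f c ∈ R.support → f c ∉ K.support := by
    by_cases hmeet : ∃ a, f a ∈ R.support ∩ K.support
    · obtain ⟨a, ha⟩ := hmeet
      exact ⟨a, fun c hc hR hK ↦ hc (f.injective (hRK ⟨hR, hK⟩ ha))⟩
    · push Not at hmeet
      exact ⟨hα.some, fun c _ hR hK ↦ hmeet c ⟨hR, hK⟩⟩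
  have hadj {c d : α} (hcd : F.Adj c d) : R.Adj (f c) (f d) ∨ K.Adj (f c) (f d) :=
    f.toHom.map_adj hcd
  have hne {c d : α} (hcd : F.Adj c d) : c ≠ a ∨ d ≠ a := by
    by_contra! ⟨rfl, rfl⟩
    exact hcd.ne rfl
  have hdich := hF.forall_ne_or_forall_ne_not a (P := fun c ↦ f c ∈ K.support)
    fun c d hc _ hcd hK ↦
      ⟨f c, ((hadj hcd).resolve_left fun hR ↦ ha c hc ⟨_, hR⟩ hK).symm⟩
  rcases hdich with hK | hR
  · refine .inr ⟨.mk ⟨f, fun {c d} hcd ↦ (hadj hcd).resolve_left fun hcdR ↦ ?_⟩ f.injective⟩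
    rcases hne hcd with hc | hd
    · exact ha c hc ⟨_, hcdR⟩ (hK c hc)
    · exact ha d hd ⟨_, hcdR.symm⟩ (hK d hd)
  · refine .inl ⟨.mk ⟨f, fun {c d} hcd ↦ (hadj hcd).resolve_right fun hcdK ↦ ?_⟩ f.injective⟩
    rcases hne hcd with hc | hd
    · exact hR c hc ⟨_, hcdK⟩
    · exact hR d hd ⟨_, hcdK.symm⟩

lemma TwoConnected.not_containsSub_sup_comap_swap [DecidableEq V] (hF : TwoConnected F)
    {R K : SimpleGraph V} (hfree : ¬ ContainsSub F (R ⊔ K)) {u v : V}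
    (hRK : R.support ∩ K.support ⊆ {v}) (hu : u ∉ K.support) :
    ¬ ContainsSub F (R ⊔ K.comap (Equiv.swap u v)) := by
  rw [containsSub_iff_isContained] at hfree ⊢
  intro h
  have hmeet := Set.subsingleton_singleton.anti (support_inter_support_comap_swap_subset hRK hu)
  apply hfree
  rcases hF.isContained_or_isContained_of_sup hmeet h with hR | hK
  · exact hR.trans (.of_le le_sup_left)
  · exact (hK.trans (Iso.comap _ K).isContained).trans (.of_le le_sup_right)

end TwoConnected

section Extremal

/-- `ρ` bounds the spectral radii of the graphs in `𝒢(m, F)`: the `F`-free graphs with `m` edges and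
no isolated vertices. -/
def IsSpecRadBound {α : Type} (F : SimpleGraph α) (m : ℕ) (ρ : ℝ) : Prop :=
  ∀ (W : Type) [Fintype W] (H : SimpleGraph W), ¬ ContainsSub F H →
    H.edgeSet.ncard = m → (∀ w : W, (H.neighborSet w).ncard ≠ 0) →
    ∀ ρ' : ℝ, IsSpecRad H ρ' → ρ' ≤ ρ

variable {α V : Type} [Fintype V] {F : SimpleGraph α} {m : ℕ} {ρ : ℝ}

-- Isolated vertices, excluded from `𝒢(m, F)`, are discarded by restricting to the support.
lemma IsSpecRadBound.dotProduct_adjMat_mulVec_le (hbound : IsSpecRadBound F m ρ) (hρ : 0 ≤ ρ)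
    {H : SimpleGraph V} (hfree : ¬ ContainsSub F H) (hm : H.edgeSet.ncard = m) (y : V → ℝ) :
    y ⬝ᵥ adjMat H *ᵥ y ≤ ρ * (y ⬝ᵥ y) := by
  classical
  rw [← dotProduct_adjMat_induce_support_mulVec]
  have hyy : (y ∘ ((↑) : H.support → V)) ⬝ᵥ (y ∘ (↑)) ≤ y ⬝ᵥ y :=
    dotProduct_comp_self_le Subtype.val_injective y
  refine le_trans ?_ (mul_le_mul_of_nonneg_left hyy hρ)
  cases isEmpty_or_nonempty H.support
  · simp
  obtain ⟨ρ', hρ'⟩ := exists_isSpecRad (H.induce H.support)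
  have hfree' : ¬ ContainsSub F (H.induce H.support) := by
    rw [containsSub_iff_isContained] at hfree ⊢
    exact fun h ↦ hfree (h.trans (Embedding.induce _).isContained)
  have hiso (a : H.support) : ((H.induce H.support).neighborSet a).ncard ≠ 0 := by
    obtain ⟨a, b, hab⟩ := a
    exact Set.ncard_ne_zero_of_mem (a := (⟨b, a, hab.symm⟩ : H.support)) hab
  have hle : ρ' ≤ ρ :=
    hbound H.support _ hfree' ((ncard_edgeSet_induce_support H).trans hm) hiso ρ' hρ'
  exact (hρ'.dotProduct_adjMat_mulVec_le _).trans
    (mul_le_mul_of_nonneg_right hle (Finset.sum_nonneg fun _ _ ↦ mul_self_nonneg _))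

lemma not_adj_of_adjMat_sup_mulVec_eq {R K K' : SimpleGraph V} (hRK : Disjoint R K)
    (hRK' : Disjoint R K') {x : V → ℝ} (hx : 0 ≤ x) (hxe : adjMat (R ⊔ K) *ᵥ x = ρ • x)
    (hxe' : adjMat (R ⊔ K') *ᵥ x = ρ • x) {u : V} (hu : u ∉ K.support) (hxu : x u ≠ 0) (w : V) :
    ¬ K'.Adj u w := by
  intro huw
  have hrow : (adjMat K' *ᵥ x) u = 0 := by
    have h := congrFun (hxe'.trans hxe.symm) u
    rw [adjMat_sup hRK, adjMat_sup hRK', add_mulVec, add_mulVec] at h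
    simpa [adjMat_mulVec_apply_eq_zero hu] using h
  have hxw : x w = 0 := eq_zero_of_adjMat_mulVec_apply_eq_zero hx huw hrow
  have hrow' : (adjMat (R ⊔ K') *ᵥ x) w = 0 := by simp [hxe', hxw]
  exact hxu (eq_zero_of_adjMat_mulVec_apply_eq_zero hx (Or.inr huw.symm) hrow')

variable [Fintype α]

lemma IsSpecRadBound.eq_bot_of_sup (hbound : IsSpecRadBound F m ρ) (hF : TwoConnected F)
    {R K : SimpleGraph V} (hfree : ¬ ContainsSub F (R ⊔ K)) (hm : (R ⊔ K).edgeSet.ncard = m)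
    {x : V → ℝ} (hx0 : x ≠ 0) (hx : 0 ≤ x) (hxe : adjMat (R ⊔ K) *ᵥ x = ρ • x)
    {u : V} (hmax : ∀ v, x v ≤ x u) (hRK : (R.support ∩ K.support).Subsingleton)
    (hu : u ∉ K.support) : K = ⊥ := by
  classical
  by_contra hK
  obtain ⟨v, ⟨w, hvw⟩, hv⟩ := exists_mem_support_inter_subset_singleton hRK hK
  set K' := K.comap (Equiv.swap u v) with hK'
  have hd : Disjoint R K := disjoint_of_subsingleton_support_inter hRK
  have hd' : Disjoint R K' := disjoint_of_subsingleton_support_inter <|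
    Set.subsingleton_singleton.anti (support_inter_support_comap_swap_subset hv hu)
  have hρ : 0 ≤ ρ := nonneg_of_mulVec_eq_smul_of_nonneg (adjMat_nonneg _) hx hx0 hxe
  have hm' : (R ⊔ K').edgeSet.ncard = m := by
    rw [ncard_edgeSet_sup hd', ncard_edgeSet_comap_equiv, ← ncard_edgeSet_sup hd, hm]
  have hform : ρ * (x ⬝ᵥ x) ≤ x ⬝ᵥ adjMat (R ⊔ K') *ᵥ x := by
    rw [← smul_eq_mul, ← dotProduct_smul, ← hxe]
    exact dotProduct_adjMat_sup_mulVec_le_sup_comap_swap hd hd' hu hx (hmax v)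
  have hxe' : adjMat (R ⊔ K') *ᵥ x = ρ • x :=
    mulVec_eq_smul_of_forall_dotProduct_mulVec_le (isHermitian_adjMat _)
      (hbound.dotProduct_adjMat_mulVec_le hρ
        (hF.not_containsSub_sup_comap_swap hfree hv hu) hm') hform
  have hxu : x u ≠ 0 := fun h ↦ hx0 (le_antisymm (fun a ↦ (hmax a).trans_eq h) hx)
  refine not_adj_of_adjMat_sup_mulVec_eq hd hd' hx hxe hxe' hu hxu (Equiv.swap u v w) ?_
  simpa [hK'] using hvw

end Extremal

section Branch

variable {V : Type*} {G : SimpleGraph V} {u v : V} {C : Set V}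

/-- `C` is a branch of `G` at `v`: the edges leaving `C` all end at `v`. Away from `v`, such a set
is a union of connected components of `G - v`; it need not be connected, and may contain `v`. -/
def IsBranchAt (G : SimpleGraph V) (v : V) (C : Set V) : Prop :=
  ∀ a ∈ C, ∀ b, G.Adj a b → b ∈ C ∨ b = v

/-- Every nonempty branch of `G` at a vertex other than `u` contains `u`: no part of `G` hangs off
the rest, at a vertex other than `u`, on the side away from `u`. -/
def BranchesContain (G : SimpleGraph V) (u : V) : Prop :=
  ∀ v ≠ u, ∀ C : Set V, IsBranchAt G v C → C.Nonempty → u ∈ C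

lemma IsBranchAt.exists_sup_eq (hC : IsBranchAt G v C) :
    ∃ R K : SimpleGraph V, R ⊔ K = G ∧ R.support ∩ K.support ⊆ {v} ∧ K.support ⊆ insert v C ∧
      ∀ a ∈ C, ∀ b, G.Adj a b → K.Adj a b := by
  have hadj {a b : V} : (G.induce Cᶜ).spanningCoe.Adj a b ↔ G.Adj a b ∧ a ∉ C ∧ b ∉ C := by
    simp [map_adj]
  have hK : (G \ (G.induce Cᶜ).spanningCoe).support ⊆ insert v C := by
    rintro a ⟨b, hab : (G \ _).Adj a b⟩
    rw [sdiff_adj, hadj] at hab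
    have := hC b
    grind [G.adj_comm a b]
  refine ⟨(G.induce Cᶜ).spanningCoe, G \ (G.induce Cᶜ).spanningCoe,
    sup_sdiff_cancel_right (spanningCoe_induce_le _ _), ?_, hK, fun a ha b hab ↦ ?_⟩
  · rintro a ⟨⟨b, hab⟩, haK⟩
    exact (hK haK).resolve_right (hadj.1 hab).2.1
  · simp [sdiff_adj, hadj, hab, ha]

lemma BranchesContain.connected (hG : BranchesContain G u) : G.Connected := by
  refine (connected_iff_exists_forall_reachable G).2 ⟨u, ?_⟩
  by_contra! ⟨t, ht⟩
  have htu : t ≠ u := by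
    rintro rfl
    exact ht (.refl _)
  have hbranch : IsBranchAt G t {a | ¬ G.Reachable u a} := fun a ha b hab ↦
    .inl fun hb ↦ ha (hb.trans hab.symm.reachable)
  exact hG t htu _ hbranch ⟨t, ht⟩ (.refl _)

lemma BranchesContain.connected_deleteVerts (hG : BranchesContain G u) (hv : v ≠ u) :
    ((⊤ : G.Subgraph).deleteVerts {v}).coe.Connected := by
  set D := (⊤ : G.Subgraph).deleteVerts {v}
  have hmem {a : V} (ha : a ≠ v) : a ∈ D.verts := by simpa [D] using ha
  refine (connected_iff_exists_forall_reachable _).2 ⟨⟨u, hmem hv.symm⟩, ?_⟩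
  by_contra! ⟨t, ht⟩
  have hbranch : IsBranchAt G v
      {a | ∃ ha : a ∈ D.verts, ¬ D.coe.Reachable ⟨u, hmem hv.symm⟩ ⟨a, ha⟩} := by
    rintro a ⟨ha, hua⟩ b hab
    refine or_iff_not_imp_right.2 fun hb ↦ ⟨hmem hb, fun hub ↦ hua (hub.trans ?_)⟩
    have hav : a ≠ v := by simpa [D] using ha
    have hba : D.coe.Adj ⟨b, hmem hb⟩ ⟨a, ha⟩ := by simp [D, hab.symm, hav, hb]
    exact hba.reachable
  obtain ⟨_, hu⟩ := hG v hv _ hbranch ⟨t, t.2, ht⟩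
  exact hu (.refl _)

lemma BranchesContain.two_le_ncard_neighborSet (hG : BranchesContain G u) {a : V} (hau : a ≠ u)
    (ha : (G.neighborSet a).ncard ≠ 0) (hadj : ¬ G.Adj u a) : 2 ≤ (G.neighborSet a).ncard := by
  by_contra! hlt
  obtain ⟨w, hw⟩ := Set.ncard_eq_one.1 (by omega : (G.neighborSet a).ncard = 1)
  have haw : G.Adj a w := hw.symm.subset rfl
  have hwu : w ≠ u := by
    rintro rfl
    exact hadj haw.symm
  have hbranch : IsBranchAt G w {a} := by
    rintro _ rfl b hb
    exact .inr (hw.subset hb)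
  exact hau (hG w hwu {a} hbranch (Set.singleton_nonempty a)).symm

end Branch

lemma IsSpecRadBound.branchesContain {α V : Type} [Fintype α] [Fintype V] {F : SimpleGraph α}
    {m : ℕ} {ρ : ℝ} (hbound : IsSpecRadBound F m ρ) (hF : TwoConnected F)
    {G : SimpleGraph V} (hfree : ¬ ContainsSub F G) (hm : G.edgeSet.ncard = m)
    (hiso : ∀ v, (G.neighborSet v).ncard ≠ 0) {x : V → ℝ} (hx0 : x ≠ 0) (hx : 0 ≤ x)
    (hxe : adjMat G *ᵥ x = ρ • x) {u : V} (hmax : ∀ v, x v ≤ x u) : BranchesContain G u := by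
  rintro v hv C hC ⟨a, ha⟩
  by_contra hu
  obtain ⟨R, K, rfl, hRK, hKC, hCK⟩ := hC.exists_sup_eq
  have huK : u ∉ K.support := fun h ↦ (hKC h).elim hv.symm hu
  have hK : K = ⊥ := hbound.eq_bot_of_sup hF hfree hm hx0 hx hxe hmax
    (Set.subsingleton_singleton.anti hRK) huK
  obtain ⟨b, hab⟩ := Set.nonempty_of_ncard_ne_zero (hiso a)
  simpa [hK] using hCK a ha b hab

/-- if `G` maximizes the spectral radius among `F`-free graphs with `m`
edges and no isolated vertices (`F` 2-connected), and `u*` has maximal Perron entry,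
then `G` is connected, no vertex other than `u*` is a cut vertex, and every vertex
outside `N[u*]` has degree at least 2. -/
theorem extremal_graph_structure {α V : Type} [Fintype α] [Fintype V]
    (F : SimpleGraph α) (hF : TwoConnected F) (m : ℕ)
    (G : SimpleGraph V) (hfree : ¬ ContainsSub F G) (hm : G.edgeSet.ncard = m)
    (hiso : ∀ v : V, (G.neighborSet v).ncard ≠ 0)
    (ρ : ℝ) (hρ : IsSpecRad G ρ)
    (hmax : ∀ (W : Type) [Fintype W] (H : SimpleGraph W), ¬ ContainsSub F H →
      H.edgeSet.ncard = m → (∀ w : W, (H.neighborSet w).ncard ≠ 0) →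
      ∀ ρ' : ℝ, IsSpecRad H ρ' → ρ' ≤ ρ)
    (x : V → ℝ) (hx0 : x ≠ 0) (hxnn : ∀ v, 0 ≤ x v) (hxe : adjMat G *ᵥ x = ρ • x)
    (ustar : V) (hustar : ∀ v, x v ≤ x ustar) :
    G.Connected ∧
    (∀ v : V, v ≠ ustar → ((⊤ : G.Subgraph).deleteVerts {v}).coe.Connected) ∧
    (∀ u : V, u ∉ G.neighborSet ustar → u ≠ ustar → 2 ≤ (G.neighborSet u).ncard) := by
  have hbranches : BranchesContain G ustar :=
    IsSpecRadBound.branchesContain hmax hF hfree hm hiso hx0 hxnn hxe hustar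
  exact ⟨hbranches.connected, fun v hv ↦ hbranches.connected_deleteVerts hv,
    fun u hadj hu ↦ hbranches.two_le_ncard_neighborSet hu (hiso u) hadj⟩
end

section
/- Let k ≥ 3 and let G be a θ(1,p,q)-free graph with m edges and no isolated vertices, where p + q = 2k+1 and q ≥ p ≥ 3, and assume m ≥ (9/4)k⁶ + 6k⁵ + 46k⁴ + 56k³ + 196k². If ρ(G) = (k−1+√(4m−k²+1))/2, then G ≅ K_k ∨ (m/k − (k−1)/2)·K_1. -/
open Matrix SimpleGraph

/-- The theta graph `θ(1,p,q)` (for `p, q ≥ 2`): the hub vertices `a = Sum.inl ()` and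
`b = Sum.inr (Sum.inl ())` are joined by an edge, by a path through the `p - 1` internal
vertices `Fin (p-1)`, and by a path through the `q - 1` internal vertices `Fin (q-1)`. -/
def thetaGraph (p q : ℕ) : SimpleGraph (Unit ⊕ Unit ⊕ Fin (p - 1) ⊕ Fin (q - 1)) :=
  SimpleGraph.fromRel (fun x y =>
    (x = Sum.inl () ∧ y = Sum.inr (Sum.inl ())) ∨
    (∃ i : Fin (p - 1), x = Sum.inl () ∧ y = Sum.inr (Sum.inr (Sum.inl i)) ∧ (i : ℕ) = 0) ∨
    (∃ i j : Fin (p - 1), x = Sum.inr (Sum.inr (Sum.inl i)) ∧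
      y = Sum.inr (Sum.inr (Sum.inl j)) ∧ (j : ℕ) = (i : ℕ) + 1) ∨
    (∃ i : Fin (p - 1), x = Sum.inr (Sum.inr (Sum.inl i)) ∧ y = Sum.inr (Sum.inl ()) ∧
      (i : ℕ) = p - 2) ∨
    (∃ i : Fin (q - 1), x = Sum.inl () ∧ y = Sum.inr (Sum.inr (Sum.inr i)) ∧ (i : ℕ) = 0) ∨
    (∃ i j : Fin (q - 1), x = Sum.inr (Sum.inr (Sum.inr i)) ∧
      y = Sum.inr (Sum.inr (Sum.inr j)) ∧ (j : ℕ) = (i : ℕ) + 1) ∨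
    (∃ i : Fin (q - 1), x = Sum.inr (Sum.inr (Sum.inr i)) ∧ y = Sum.inr (Sum.inl ()) ∧
      (i : ℕ) = q - 2))

/-- The join `K_k ∨ s·K₁`: every `inl` vertex is adjacent to everything else. -/
def joinStarG (k s : ℕ) : SimpleGraph (Fin k ⊕ Fin s) :=
  SimpleGraph.fromRel (fun x _ => x.isLeft = true)

/-!
Scale the Perron vector `y` so that its largest entry is `y z = 1`; let `U` be the neighbourhood
of `z`, and `W` the set of the remaining vertices. Summing `ρ * y u` over `u ∈ U` gives
`ρ ^ 2 = #U + ∑ u ∈ U, d_U u * y u + ∑ w ∈ W, d_U w * y w`, where `d_S v` counts the neighbours of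
`v` in `S`. Compared with the number of edges, this bounds a total deficit to which every edge
contributes. There is no path on `2k` vertices inside `U`, since a cone over such a path contains
`θ(1,p,q)`, so the Erdős–Gallai theorem bounds the remaining terms. Hence all but a bounded part of
the edges inside `U`, or between `U` and `W`, have an end with `y` close to `1`.

A vertex other than `z` with `y ≥ 3/4` is a hub: any two of them have at least `2k` common
neighbours in `U`. Given `k` hubs, one of them in `U`, a greedy choice of common neighbours yields
a cycle of length `2k + 1` through `z` on which the neighbours of `z` alternate with the hubs, and
this cycle with a suitable chord at `z` is `θ(1,p,q)`. So `U` contains at most `k - 1` hubs. With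
fewer, the deficit inequality fails because `ρ` is large; with exactly `k - 1`, it says that a sum
of nonnegative terms is at most zero, so that they all vanish. Then `W` is empty, and the hubs
together with `z` form the `K_k` of the join.
-/

open scoped Finset Classical

section Theta

variable {V : Type} {G : SimpleGraph V} {p q k : ℕ}

theorem adj_of_fromRel_adj {α β : Type*} {r : α → α → Prop} {H : SimpleGraph β} {f : α → β}
    (hf : ∀ x y, r x y → H.Adj (f x) (f y)) {x y : α} (hxy : (SimpleGraph.fromRel r).Adj x y) :
    H.Adj (f x) (f y) :=
  ((SimpleGraph.fromRel_adj r x y).1 hxy).2.elim (hf x y) fun h => (hf y x h).symm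

/-- Positions of the vertices of `θ(1,p,q)` on its Hamiltonian cycle of length `p + q`, traversed
from the first hub along the path of length `p` and back along the path of length `q`. -/
def thetaIndex (p q : ℕ) : Unit ⊕ Unit ⊕ Fin (p - 1) ⊕ Fin (q - 1) → ℕ
  | Sum.inl _ => 0
  | Sum.inr (Sum.inl _) => p
  | Sum.inr (Sum.inr (Sum.inl i)) => i + 1
  | Sum.inr (Sum.inr (Sum.inr i)) => p + q - 1 - i

theorem thetaIndex_lt (hp : 2 ≤ p) (hq : 2 ≤ q) (x) : thetaIndex p q x < p + q := by
  rcases x with _ | _ | i | i <;> simp only [thetaIndex] <;> omega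

theorem thetaIndex_injective (hp : 2 ≤ p) : Function.Injective (thetaIndex p q) := by
  rintro (x | x | x | x) (y | y | y | y) h <;> simp only [thetaIndex] at h <;>
    first
    | rfl
    | (exfalso; omega)
    | (congr 3; omega)

theorem containsSub_thetaGraph_of_cycle (hp : 2 ≤ p) (hq : 2 ≤ q) {c : ℕ → V}
    (hinj : Set.InjOn c (Set.Iio (p + q))) (hadj : ∀ i, i + 1 < p + q → G.Adj (c i) (c (i + 1)))
    (hclose : G.Adj (c 0) (c (p + q - 1))) (hchord : G.Adj (c 0) (c p)) :
    ContainsSub (thetaGraph p q) G := by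
  refine ⟨⟨c ∘ thetaIndex p q, adj_of_fromRel_adj ?_⟩, fun x y hxy => thetaIndex_injective hp <|
    hinj (thetaIndex_lt hp hq x) (thetaIndex_lt hp hq y) hxy⟩
  have hstep {i j : ℕ} (hij : j = i + 1) (hj : j < p + q) : G.Adj (c i) (c j) := by
    subst hij
    exact hadj i hj
  rintro x y (⟨rfl, rfl⟩ | ⟨i, rfl, rfl, hi⟩ | ⟨i, j, rfl, rfl, hij⟩ | ⟨i, rfl, rfl, hi⟩ |
    ⟨i, rfl, rfl, hi⟩ | ⟨i, j, rfl, rfl, hij⟩ | ⟨i, rfl, rfl, hi⟩) <;>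
    simp only [Function.comp_apply, thetaIndex]
  · exact hchord
  · exact hstep (by omega) (by omega)
  · exact hstep (by omega) (by omega)
  · exact hstep (by omega) (by omega)
  · simpa only [hi, Nat.sub_zero] using hclose
  · exact (hstep (by omega) (by omega)).symm
  · exact (hstep (by omega) (by omega)).symm

theorem ContainsSub.thetaGraph_swap (h : ContainsSub (thetaGraph q p) G) :
    ContainsSub (thetaGraph p q) G := by
  obtain ⟨f, hf⟩ := h
  let swap : Unit ⊕ Unit ⊕ Fin (p - 1) ⊕ Fin (q - 1) → Unit ⊕ Unit ⊕ Fin (q - 1) ⊕ Fin (p - 1) :=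
    Sum.map id (Sum.map id Sum.swap)
  refine ⟨f.comp ⟨swap, adj_of_fromRel_adj ?_⟩, hf.comp <| Function.injective_id.sumMap <|
    Function.injective_id.sumMap Sum.swap_leftInverse.injective⟩
  rintro x y (⟨rfl, rfl⟩ | ⟨i, rfl, rfl, hi⟩ | ⟨i, j, rfl, rfl, hij⟩ | ⟨i, rfl, rfl, hi⟩ |
    ⟨i, rfl, rfl, hi⟩ | ⟨i, j, rfl, rfl, hij⟩ | ⟨i, rfl, rfl, hi⟩)
  case' inr.inr.inl | inr.inr.inr.inr.inr.inl =>
    have hne : i ≠ j := by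
      rintro rfl
      omega
  all_goals simp [swap, thetaGraph, *]

/-- A list of vertices forming a path that avoids `z` and whose entries of odd index are neighbours
of `z`. -/
structure IsAlternatingPath {V : Type*} (G : SimpleGraph V) (z : V) (l : List V) : Prop where
  nodup : l.Nodup
  isChain : l.IsChain G.Adj
  notMem : z ∉ l
  adj_of_odd : ∀ (i : ℕ) (hi : i < l.length), Odd i → G.Adj z l[i]

/-- The closed walk through `z` and then through an alternating path is a Hamiltonian cycle of
`θ(1,p,q)`. As `p + q` is odd, the chord from `z` joins it to an entry of odd index. -/
theorem IsAlternatingPath.containsSub_thetaGraph {z : V} {l : List V} (hl : IsAlternatingPath G z l)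
    (hhead : ∀ x ∈ l.head?, G.Adj z x) (hlen : l.length = 2 * k) (hp : 2 ≤ p) (hq : 2 ≤ q)
    (hsum : p + q = 2 * k + 1) : ContainsSub (thetaGraph p q) G := by
  let c : ℕ → V := fun i => (z :: l).getD i z
  have hc {i : ℕ} (hi : i < (z :: l).length) : c i = (z :: l)[i] := List.getD_eq_getElem _ _ hi
  have hlen' : (z :: l).length = 2 * k + 1 := by simp [hlen]
  have hinj : Set.InjOn c (Set.Iio (2 * k + 1)) := by
    intro i hi j hj hij
    rw [hc (hi.trans_eq hlen'.symm), hc (hj.trans_eq hlen'.symm)] at hij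
    exact (List.nodup_cons.2 ⟨hl.notMem, hl.nodup⟩).getElem_inj_iff.1 hij
  have hadj (i : ℕ) (hi : i + 1 < 2 * k + 1) : G.Adj (c i) (c (i + 1)) := by
    rw [hc (by omega), hc (by omega)]
    exact List.isChain_iff_getElem.1 (List.isChain_cons.2 ⟨hhead, hl.isChain⟩) i (by omega)
  have heven {i : ℕ} (hi : 0 < i) (hik : i ≤ k) : G.Adj (c 0) (c (2 * i)) := by
    obtain ⟨j, rfl⟩ : ∃ j, i = j + 1 := ⟨i - 1, by omega⟩
    rw [hc (by omega), hc (by omega)]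
    exact hl.adj_of_odd (2 * j + 1) (by omega) (odd_two_mul_add_one j)
  have hclose : G.Adj (c 0) (c (2 * k)) := heven (by omega) le_rfl
  rcases p.even_or_odd' with ⟨t, rfl | rfl⟩
  · exact containsSub_thetaGraph_of_cycle hp hq (hsum ▸ hinj) (hsum ▸ hadj)
      (by rwa [hsum]) (heven (by omega) (by omega))
  · obtain ⟨s, rfl⟩ : ∃ s, q = 2 * s := ⟨k - t, by omega⟩
    rw [add_comm] at hsum
    exact (containsSub_thetaGraph_of_cycle hq hp (hsum ▸ hinj) (hsum ▸ hadj)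
      (by rwa [hsum]) (heven (by omega) (by omega))).thetaGraph_swap

end Theta

section NbrSums

variable {V : Type*} (G : SimpleGraph V)

/-- The sum of `f` over the neighbours of `v` in `S`. -/
noncomputable def nbrSum (f : V → ℝ) (S : Finset V) (v : V) : ℝ :=
  ∑ u ∈ S with G.Adj v u, f u

/-- The number of neighbours of `v` in `S`, where `v` itself need not belong to `S`. -/
noncomputable def degIn (S : Finset V) (v : V) : ℕ :=
  #{u ∈ S | G.Adj v u}

theorem sum_nbrs_comm {M : Type*} [AddCommMonoid M] (S T : Finset V) (F : V → V → M) :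
    ∑ v ∈ S, ∑ u ∈ T with G.Adj v u, F v u = ∑ u ∈ T, ∑ v ∈ S with G.Adj u v, F v u :=
  Finset.sum_comm' fun v u => by
    simp only [Finset.mem_filter, G.adj_comm]
    tauto

theorem sum_degIn_comm (S T : Finset V) : ∑ v ∈ S, degIn G T v = ∑ u ∈ T, degIn G S u := by
  simpa only [degIn, Finset.card_eq_sum_ones] using sum_nbrs_comm G S T fun _ _ => 1

theorem nbrSum_const (c : ℝ) (S : Finset V) (v : V) :
    nbrSum G (fun _ => c) S v = degIn G S v * c := by
  rw [nbrSum, Finset.sum_const, nsmul_eq_mul, degIn]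

theorem sum_nbrSum (f : V → ℝ) (S T : Finset V) :
    ∑ v ∈ S, nbrSum G f T v = ∑ u ∈ T, degIn G S u * f u :=
  (sum_nbrs_comm G S T fun _ u => f u).trans <| Finset.sum_congr rfl fun _ _ => nbrSum_const G ..

theorem nbrSum_one_sub (f : V → ℝ) (S : Finset V) (v : V) :
    nbrSum G (fun u => 1 - f u) S v = degIn G S v - nbrSum G f S v := by
  rw [nbrSum, Finset.sum_sub_distrib, ← nbrSum, ← nbrSum, nbrSum_const, mul_one]

theorem sum_nbrSum_min_add_sum_nbrSum_max (f : V → ℝ) (T : Finset V) :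
    ∑ u ∈ T, nbrSum G (fun v => min (f u) (f v)) T u +
      ∑ u ∈ T, nbrSum G (fun v => max (f u) (f v)) T u = 2 * ∑ u ∈ T, degIn G T u * f u := by
  calc
    _ = ∑ u ∈ T, (nbrSum G (fun _ => f u) T u + nbrSum G f T u) := by
      simp only [nbrSum, ← Finset.sum_add_distrib, min_add_max]
    _ = _ := by
      rw [Finset.sum_add_distrib, sum_nbrSum, two_mul]
      simp only [nbrSum_const]

theorem nbrSum_nonneg {f : V → ℝ} (hf : ∀ u, 0 ≤ f u) (S : Finset V) (v : V) :
    0 ≤ nbrSum G f S v :=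
  Finset.sum_nonneg fun u _ => hf u

theorem nbrSum_mono {f g : V → ℝ} (hfg : ∀ u, f u ≤ g u) (S : Finset V) (v : V) :
    nbrSum G f S v ≤ nbrSum G g S v :=
  Finset.sum_le_sum fun u _ => hfg u

theorem degIn_le_card (S : Finset V) (v : V) : degIn G S v ≤ #S :=
  Finset.card_filter_le _ _

variable {G}

theorem degIn_eq_zero_iff {S : Finset V} {v : V} : degIn G S v = 0 ↔ ∀ u ∈ S, ¬ G.Adj v u := by
  rw [degIn, Finset.card_eq_zero, Finset.filter_eq_empty_iff]

theorem degIn_eq_card_iff {S : Finset V} {v : V} : degIn G S v = #S ↔ ∀ u ∈ S, G.Adj v u :=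
  Finset.card_filter_eq_iff

theorem degIn_lt_card {S : Finset V} {v : V} (hv : v ∈ S) : degIn G S v < #S :=
  (degIn_le_card G S v).lt_of_ne fun h => G.irrefl (degIn_eq_card_iff.1 h v hv)

theorem adj_of_degIn_add_one_eq_card {S : Finset V} {v u : V} (hS : degIn G S v + 1 = #S)
    (hv : v ∈ S) (hu : u ∈ S) (huv : u ≠ v) : G.Adj v u := by
  have herase : degIn G (S.erase v) v = degIn G S v := by
    rw [degIn, degIn, Finset.filter_erase, Finset.erase_eq_of_notMem (by simp)]
  refine degIn_eq_card_iff.1 ?_ u (Finset.mem_erase.2 ⟨huv, hu⟩)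
  rw [herase, Finset.card_erase_of_mem hv, ← hS, Nat.add_sub_cancel]

variable (G)

theorem degIn_add_degIn_sdiff {B T : Finset V} (hBT : B ⊆ T) (v : V) :
    degIn G B v + degIn G (T \ B) v = degIn G T v := by
  rw [degIn, degIn, degIn, ← Finset.card_union_of_disjoint
    (Finset.disjoint_filter_filter Finset.disjoint_sdiff), ← Finset.filter_union,
    Finset.union_sdiff_of_subset hBT]

theorem sum_degIn_eq {B T : Finset V} (hBT : B ⊆ T) :
    ∑ v ∈ T, degIn G T v =
      ∑ v ∈ B, degIn G B v + 2 * ∑ v ∈ T \ B, degIn G B v + ∑ v ∈ T \ B, degIn G (T \ B) v := by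
  have hcomm := sum_degIn_comm G B (T \ B)
  simp only [← Finset.sum_sdiff hBT, ← degIn_add_degIn_sdiff G hBT, Finset.sum_add_distrib]
  omega

/-- The vertices of `S` at which `y` is at least `3/4`: for `S` the neighbourhood of the vertex with
the largest entry, these and that vertex turn out to be the complete part of the join. -/
noncomputable def large (y : V → ℝ) (S : Finset V) : Finset V :=
  {v ∈ S | 3 / 4 ≤ y v}

theorem mem_large {y : V → ℝ} {S : Finset V} {v : V} : v ∈ large y S ↔ v ∈ S ∧ 3 / 4 ≤ y v :=
  Finset.mem_filter

theorem large_subset (y : V → ℝ) (S : Finset V) : large y S ⊆ S :=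
  Finset.filter_subset _ _

theorem nbrSum_le_card_large_add {y g : V → ℝ} (hy : ∀ v, y v ≤ 1) (hg : ∀ v, 0 ≤ g v)
    (hyg : ∀ v, y v < 3 / 4 → 1 / 4 ≤ g v) (S : Finset V) (v : V) :
    nbrSum G y S v ≤ #(large y S) + 3 * nbrSum G g S v := by
  have hpoint (u : V) : y u ≤ (if 3 / 4 ≤ y u then 1 else 0) + 3 * g u := by
    split_ifs with hu
    · linarith [hy u, hg u]
    · linarith [hyg u (not_le.1 hu)]
  calc
    nbrSum G y S v ≤ ∑ u ∈ S with G.Adj v u, ((if 3 / 4 ≤ y u then 1 else 0) + 3 * g u) :=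
      Finset.sum_le_sum fun u _ => hpoint u
    _ = #(large y {u ∈ S | G.Adj v u}) + 3 * nbrSum G g S v := by
      rw [Finset.sum_add_distrib, Finset.sum_boole, ← Finset.mul_sum, large, nbrSum]
    _ ≤ #(large y S) + 3 * nbrSum G g S v := by
      gcongr
      exact Finset.filter_subset_filter _ (Finset.filter_subset _ _)

end NbrSums

section ErdosGallai

variable {V : Type*} {G : SimpleGraph V} {T : Finset V} {l : List V}

/-- The list `l` is the vertex sequence of a path of `G` inside `T`. -/
structure IsPathIn (G : SimpleGraph V) (T : Finset V) (l : List V) : Prop where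
  nodup : l.Nodup
  isChain : l.IsChain G.Adj
  subset : ∀ v ∈ l, v ∈ T

theorem IsPathIn.nil : IsPathIn G T [] :=
  ⟨List.nodup_nil, List.isChain_nil, by simp⟩

theorem IsPathIn.cons {v : V} (hl : IsPathIn G T l) (hv : v ∈ T) (hvl : v ∉ l)
    (hadj : ∀ x ∈ l.head?, G.Adj v x) : IsPathIn G T (v :: l) :=
  ⟨List.nodup_cons.2 ⟨hvl, hl.nodup⟩, List.isChain_cons.2 ⟨hadj, hl.isChain⟩,
    List.forall_mem_cons.2 ⟨hv, hl.subset⟩⟩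

theorem IsPathIn.take (hl : IsPathIn G T l) (n : ℕ) : IsPathIn G T (l.take n) :=
  ⟨hl.nodup.sublist (l.take_sublist n), hl.isChain.take n,
    fun v hv => hl.subset v (List.mem_of_mem_take hv)⟩

theorem IsPathIn.reverse (hl : IsPathIn G T l) : IsPathIn G T l.reverse :=
  ⟨List.nodup_reverse.2 hl.nodup, List.isChain_reverse.2 (hl.isChain.imp fun _ _ h => h.symm),
    fun v hv => hl.subset v (List.mem_reverse.1 hv)⟩

theorem IsPathIn.length_le_card (hl : IsPathIn G T l) : l.length ≤ #T :=
  (List.toFinset_card_of_nodup hl.nodup).symm.trans_le <|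
    Finset.card_le_card fun v hv => hl.subset v (List.mem_toFinset.1 hv)

/-- A path of `G` inside `T` with the largest possible number of vertices. -/
structure IsLongestPathIn (G : SimpleGraph V) (T : Finset V) (l : List V) : Prop
    extends IsPathIn G T l where
  length_le : ∀ l', IsPathIn G T l' → l'.length ≤ l.length

variable (G T) in
theorem exists_isLongestPathIn : ∃ l, IsLongestPathIn G T l := by
  let lengths : Set ℕ := {n | ∃ l, IsPathIn G T l ∧ l.length = n}
  have hbdd : BddAbove lengths := ⟨#T, fun n ⟨_, hl, hn⟩ => hn ▸ hl.length_le_card⟩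
  obtain ⟨l, hl, hlen⟩ := Nat.sSup_mem (s := lengths) ⟨0, [], IsPathIn.nil, rfl⟩ hbdd
  exact ⟨l, hl, fun l' hl' => hlen ▸ le_csSup hbdd ⟨l', hl', rfl⟩⟩

theorem IsLongestPathIn.reverse (hl : IsLongestPathIn G T l) : IsLongestPathIn G T l.reverse :=
  ⟨hl.toIsPathIn.reverse, fun l' hl' => (hl.length_le l' hl').trans_eq List.length_reverse.symm⟩

theorem IsLongestPathIn.mem_of_adj_head {a z : V} (hl : IsLongestPathIn G T (a :: l)) (hz : z ∈ T)
    (haz : G.Adj a z) : z ∈ l := by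
  by_contra hzl
  have hza : z ∉ a :: l := by simp [hzl, haz.ne']
  have := hl.length_le _ (hl.toIsPathIn.cons hz hza (by simpa using haz.symm))
  simp at this

theorem exists_consecutive_mem_of_length_lt {A B : Finset V} {a : V} (hA : ∀ x ∈ A, x ∈ l)
    (hB : ∀ x ∈ B, x ∈ (a :: l).dropLast) (hcard : l.length < #A + #B) :
    ∃ s t, ∃ x ∈ B, ∃ y ∈ A, a :: l = s ++ x :: y :: t := by
  induction l generalizing a A B with
  | nil =>
    have hA : A = ∅ := Finset.eq_empty_of_forall_notMem fun x hx => by simpa using hA x hx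
    have hB : B = ∅ := Finset.eq_empty_of_forall_notMem fun x hx => by simpa using hB x hx
    simp [hA, hB] at hcard
  | cons b l ih =>
    by_cases hab : a ∈ B ∧ b ∈ A
    · exact ⟨[], l, a, hab.1, b, hab.2, rfl⟩
    · have hcard' : l.length < #(A.erase b) + #(B.erase a) := by
        rw [List.length_cons] at hcard
        rcases not_and_or.1 hab with ha | hb
        · have := Finset.pred_card_le_card_erase (s := A) (a := b)
          rw [Finset.erase_eq_of_notMem ha]
          omega
        · have := Finset.pred_card_le_card_erase (s := B) (a := a)
          rw [Finset.erase_eq_of_notMem hb]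
          omega
      obtain ⟨s, t, x, hx, y, hy, h⟩ := ih
        (fun x hx => (List.mem_cons.1 (hA x (Finset.mem_of_mem_erase hx))).resolve_left
          (Finset.ne_of_mem_erase hx))
        (fun x hx => (List.mem_cons.1 (hB x (Finset.mem_of_mem_erase hx))).resolve_left
          (Finset.ne_of_mem_erase hx)) hcard'
      exact ⟨a :: s, t, x, Finset.mem_of_mem_erase hx, y, Finset.mem_of_mem_erase hy, by simp [h]⟩

theorem IsPathIn.rotate {s t : List V} (hl : IsPathIn G T (s ++ t))
    (hclose : ∀ x ∈ t.getLast?, ∀ y ∈ s.head?, G.Adj x y) : IsPathIn G T (t ++ s) := by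
  have hchain := List.isChain_append.1 hl.isChain
  exact ⟨List.nodup_append_comm.1 hl.nodup,
    List.isChain_append.2 ⟨hchain.2.1, hchain.1, hclose⟩,
    fun v hv => hl.subset v (List.perm_append_comm.mem_iff.1 hv)⟩

/-- A closed path can be opened at any of its vertices, and then prolonged by an outside
neighbour of that vertex. -/
theorem IsLongestPathIn.mem_of_adj_of_closed (hl : IsLongestPathIn G T l)
    (hclose : ∀ x ∈ l.getLast?, ∀ y ∈ l.head?, G.Adj x y) {v z : V} (hv : v ∈ l) (hz : z ∈ T)
    (hvz : G.Adj v z) : z ∈ l := by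
  obtain ⟨s, t, rfl⟩ := List.append_of_mem hv
  have hrot : IsPathIn G T (v :: t ++ s) := by
    refine hl.toIsPathIn.rotate fun x hx y hy => hclose x ?_ y ?_
    · simpa [List.getLast?_append] using hx
    · simp [List.head?_append, Option.mem_def.1 hy]
  have hrotlong : IsLongestPathIn G T (v :: (t ++ s)) :=
    ⟨hrot, fun l' hl' => (hl.length_le l' hl').trans_eq (by simp; omega)⟩
  have := hrotlong.mem_of_adj_head hz hvz
  simp only [List.mem_append, List.mem_cons] at this ⊢
  tauto

theorem IsPathIn.append_reverse {s t : List V} (hl : IsPathIn G T (s ++ t))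
    (hadj : ∀ x ∈ s.getLast?, ∀ y ∈ t.getLast?, G.Adj x y) : IsPathIn G T (s ++ t.reverse) := by
  have hperm : (s ++ t.reverse).Perm (s ++ t) := t.reverse_perm.append_left s
  have hchain := List.isChain_append.1 hl.isChain
  exact ⟨hperm.nodup_iff.2 hl.nodup, List.isChain_append.2 ⟨hchain.1,
      List.isChain_reverse.2 (hchain.2.1.imp fun _ _ h => h.symm), by simpa using hadj⟩,
    fun v hv => hl.subset v (hperm.mem_iff.1 hv)⟩

theorem IsLongestPathIn.exists_crossing (hl : IsLongestPathIn G T l) (hne : l ≠ [])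
    (hdeg : ∀ v ∈ T, l.length ≤ 2 * degIn G T v) :
    ∃ s t, l = s ++ t ∧ s ≠ [] ∧ t ≠ [] ∧ (∀ x ∈ s.getLast?, ∀ b ∈ t.getLast?, G.Adj x b) ∧
      ∀ y ∈ t.head?, ∀ a ∈ s.head?, G.Adj y a := by
  obtain ⟨a, r, rfl⟩ := List.exists_cons_of_ne_nil hne
  obtain ⟨d, b, hdb⟩ := (List.eq_nil_or_concat' (a :: r)).resolve_left hne
  have hrev : IsLongestPathIn G T (b :: d.reverse) := by simpa [hdb] using hl.reverse
  have hcard : r.length < #{u ∈ T | G.Adj a u} + #{u ∈ T | G.Adj b u} := by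
    have ha := hdeg a (hl.subset a (by simp))
    have hb := hdeg b (hl.subset b (by simp [hdb]))
    simp only [degIn, List.length_cons] at ha hb
    omega
  obtain ⟨s, t, x, hx, y, hy, hst⟩ := exists_consecutive_mem_of_length_lt (a := a)
    (fun u hu => hl.mem_of_adj_head (Finset.mem_filter.1 hu).1 (Finset.mem_filter.1 hu).2)
    (fun u hu => by
      simpa [hdb] using hrev.mem_of_adj_head (Finset.mem_filter.1 hu).1 (Finset.mem_filter.1 hu).2)
    hcard
  have hhead : (s ++ [x]).head? = some a := by
    simpa [List.head?_append] using (congrArg List.head? hst).symm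
  have hlast : (y :: t).getLast? = some b := by
    simpa [List.getLast?_append] using congrArg List.getLast? (hst.symm.trans hdb)
  refine ⟨s ++ [x], y :: t, by simpa using hst, by simp, by simp, fun u hu w hw => ?_,
    fun u hu w hw => ?_⟩
  · obtain rfl : x = u := by simpa using hu
    obtain rfl : b = w := Option.some_inj.1 (hlast.symm.trans hw)
    exact (Finset.mem_filter.1 hx).2.symm
  · obtain rfl : y = u := by simpa using hu
    obtain rfl : a = w := Option.some_inj.1 (hhead.symm.trans hw)
    exact (Finset.mem_filter.1 hy).2.symm

theorem IsLongestPathIn.mem_of_adj (hl : IsLongestPathIn G T l)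
    (hdeg : ∀ v ∈ T, l.length ≤ 2 * degIn G T v) {v z : V} (hv : v ∈ l) (hz : z ∈ T)
    (hvz : G.Adj v z) : z ∈ l := by
  obtain ⟨s, t, rfl, hs, ht, hlast, hclose⟩ := hl.exists_crossing (List.ne_nil_of_mem hv) hdeg
  have hlong : IsLongestPathIn G T (s ++ t.reverse) :=
    ⟨hl.toIsPathIn.append_reverse hlast,
      fun l' hl' => (hl.length_le l' hl').trans_eq (by simp)⟩
  have hmem (u : V) : u ∈ s ++ t.reverse ↔ u ∈ s ++ t := by simp
  refine (hmem z).1 <| hlong.mem_of_adj_of_closed (fun u hu w hw => ?_) ((hmem v).2 hv) hz hvz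
  rw [List.getLast?_append_of_ne_nil _ (by simpa using ht), List.getLast?_reverse] at hu
  rw [List.head?_append_of_ne_nil _ hs] at hw
  exact hclose u hu w hw

theorem sum_degIn_le_mul_card_of_closed {S : Finset V} (hST : S ⊆ T) {t : ℕ}
    (hclosed : ∀ v ∈ S, ∀ z ∈ T, G.Adj v z → z ∈ S) (hcard : #S ≤ t + 1)
    (hrest : ∑ v ∈ T \ S, degIn G (T \ S) v ≤ t * #(T \ S)) :
    ∑ v ∈ T, degIn G T v ≤ t * #T := by
  have hS : ∑ v ∈ S, degIn G S v ≤ t * #S := by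
    rw [mul_comm, ← smul_eq_mul]
    exact Finset.sum_le_card_nsmul _ _ _ fun v hv => by have := degIn_lt_card (G := G) hv; omega
  have hcross : ∑ v ∈ T \ S, degIn G S v = 0 := Finset.sum_eq_zero fun v hv =>
    degIn_eq_zero_iff.2 fun u hu hvu =>
      (Finset.mem_sdiff.1 hv).2 (hclosed u hu v (Finset.mem_sdiff.1 hv).1 hvu.symm)
  rw [sum_degIn_eq G hST, hcross, ← Finset.card_sdiff_add_card_eq_card hST]
  linarith

theorem sum_degIn_le_mul_card_of_erase {v : V} (hv : v ∈ T) {t : ℕ} (hdeg : 2 * degIn G T v ≤ t)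
    (hrest : ∑ u ∈ T \ {v}, degIn G (T \ {v}) u ≤ t * #(T \ {v})) :
    ∑ u ∈ T, degIn G T u ≤ t * #T := by
  have hvT : {v} ⊆ T := Finset.singleton_subset_iff.2 hv
  have hself : degIn G {v} v = 0 := by simp [degIn]
  have hcross : ∑ u ∈ T \ {v}, degIn G {v} u = degIn G T v := by
    rw [sum_degIn_comm, Finset.sum_singleton, ← degIn_add_degIn_sdiff G hvT v, hself, zero_add]
  rw [sum_degIn_eq G hvT, hcross, Finset.sum_singleton, hself,
    ← Finset.card_sdiff_add_card_eq_card hvT, Finset.card_singleton]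
  linarith

/-- The Erdős–Gallai theorem on graphs without a path on `t + 2` vertices. -/
theorem sum_degIn_le_mul_card_of_no_path {t : ℕ} (hno : ∀ l, IsPathIn G T l → l.length ≠ t + 2) :
    ∑ v ∈ T, degIn G T v ≤ t * #T := by
  induction T using Finset.strongInduction with
  | H T ih =>
    have ih' {S : Finset V} (hS : S ⊆ T) (hne : S.Nonempty) :
        ∑ v ∈ T \ S, degIn G (T \ S) v ≤ t * #(T \ S) :=
      ih _ (Finset.sdiff_ssubset hS hne) fun l hl => hno l
        ⟨hl.nodup, hl.isChain, fun v hv => Finset.sdiff_subset (hl.subset v hv)⟩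
    by_cases hlow : ∃ v ∈ T, 2 * degIn G T v ≤ t
    · obtain ⟨v, hv, hdeg⟩ := hlow
      exact sum_degIn_le_mul_card_of_erase hv hdeg <|
        ih' (Finset.singleton_subset_iff.2 hv) (Finset.singleton_nonempty v)
    push Not at hlow
    obtain rfl | ⟨v, hv⟩ := T.eq_empty_or_nonempty
    · simp
    obtain ⟨l, hl⟩ := exists_isLongestPathIn G T
    have hpos : 0 < l.length := hl.length_le [v] (IsPathIn.nil.cons hv (by simp) (by simp))
    have hshort : l.length ≤ t + 1 := by
      by_contra! h
      exact hno _ (hl.toIsPathIn.take (t + 2)) (List.length_take_of_le h)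
    have hlT : l.toFinset ⊆ T := fun v hv => hl.subset v (List.mem_toFinset.1 hv)
    refine sum_degIn_le_mul_card_of_closed hlT (fun v hv z hz hvz => ?_)
      ((List.toFinset_card_le l).trans hshort) (ih' hlT ?_)
    · exact List.mem_toFinset.2 <| hl.mem_of_adj (fun u hu => by have := hlow u hu; omega)
        (List.mem_toFinset.1 hv) hz hvz
    · exact (List.toFinset_nonempty_iff l).2 (List.ne_nil_of_length_pos hpos)

/-- Subtracting the minimum of `f` over `T` makes the contribution of a minimising vertex vanish,
so that an induction can remove it. -/
theorem sum_nbrSum_min_le {c : ℝ} (hc : ∀ S ⊆ T, ((∑ v ∈ S, degIn G S v : ℕ) : ℝ) ≤ c * #S)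
    {f : V → ℝ} (hf : ∀ v ∈ T, 0 ≤ f v) :
    ∑ u ∈ T, nbrSum G (fun v => min (f u) (f v)) T u ≤ c * ∑ v ∈ T, f v := by
  induction T using Finset.strongInduction generalizing f with
  | H T ih =>
    obtain rfl | hne := T.eq_empty_or_nonempty
    · simp
    obtain ⟨w, hw, hmin⟩ := T.exists_min_image f hne
    let g : V → ℝ := fun v => f v - f w
    have hg : ∀ v ∈ T, 0 ≤ g v := fun v hv => sub_nonneg.2 (hmin v hv)
    have hgw : g w = 0 := sub_self _
    have hrest := ih (T.erase w) (Finset.erase_ssubset hw)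
      (fun S hS => hc S (hS.trans (Finset.erase_subset w T)))
      fun v hv => hg v (Finset.mem_of_mem_erase hv)
    have hsum : ∑ v ∈ T, f v = f w * #T + ∑ v ∈ T.erase w, g v := by
      rw [Finset.sum_erase T hgw, Finset.sum_sub_distrib, Finset.sum_const, nsmul_eq_mul]
      ring
    have hshift (u : V) : nbrSum G (fun v => min (f u) (f v)) T u =
        degIn G T u * f w + nbrSum G (fun v => min (g u) (g v)) T u := by
      rw [← nbrSum_const, nbrSum, nbrSum, nbrSum, ← Finset.sum_add_distrib]
      exact Finset.sum_congr rfl fun v _ => by rw [min_sub_sub_right]; ring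
    have herase : ∑ u ∈ T, nbrSum G (fun v => min (g u) (g v)) T u =
        ∑ u ∈ T.erase w, nbrSum G (fun v => min (g u) (g v)) (T.erase w) u := by
      rw [← Finset.sum_erase T (a := w)]
      · refine Finset.sum_congr rfl fun u hu => ?_
        rw [nbrSum, nbrSum, Finset.filter_erase, Finset.sum_erase]
        rw [hgw, min_eq_right (hg u (Finset.mem_of_mem_erase hu))]
      · exact Finset.sum_eq_zero fun v hv => by
          rw [hgw, min_eq_left (hg v (Finset.mem_filter.1 hv).1)]
    have hdeg := mul_le_mul_of_nonneg_left (hc T subset_rfl) (hf w hw)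
    rw [Nat.cast_sum] at hdeg
    simp only [hshift, Finset.sum_add_distrib, herase, ← Finset.sum_mul, hsum]
    linarith

end ErdosGallai

section AlternatingPaths

variable {V : Type*} {G : SimpleGraph V} {z : V} {U F T : Finset V}

theorem IsAlternatingPath.nil : IsAlternatingPath G z [] :=
  ⟨List.nodup_nil, List.isChain_nil, List.not_mem_nil, fun _ hi => absurd hi (Nat.not_lt_zero _)⟩

theorem IsAlternatingPath.cons_cons {l : List V} (hl : IsAlternatingPath G z l) {h u : V}
    (hhl : h ∉ l) (hul : u ∉ l) (hzh : z ≠ h) (hhu : G.Adj h u) (hu : ∀ x ∈ l.head?, G.Adj u x)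
    (hzu : G.Adj z u) : IsAlternatingPath G z (h :: u :: l) where
  nodup := by simp [hhl, hul, hhu.ne, hl.nodup]
  isChain := by
    rw [List.isChain_cons_cons, List.isChain_cons]
    exact ⟨hhu, hu, hl.isChain⟩
  notMem := by simp [hzh, hzu.ne, hl.notMem]
  adj_of_odd i hi hodd := by
    match i with
    | 0 => simp at hodd
    | 1 => exact hzu
    | i + 2 => exact hl.adj_of_odd i (by simpa using hi) (by simpa [parity_simps] using hodd)

/-- Consecutive entries of `hs` are joined, and the last one is followed, by pairwise distinct
common neighbours taken greedily in `U`. -/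
theorem exists_isAlternatingPath_of_list {hs : List V} (hU : ∀ u ∈ U, G.Adj z u) (hnd : hs.Nodup)
    (hz : z ∉ hs) (hF : ∀ h ∈ hs, h ∉ F)
    (hcommon : ∀ h ∈ hs, ∀ h' ∈ hs,
      #F + 2 * hs.length ≤ #{u ∈ U | G.Adj h u ∧ G.Adj h' u}) :
    ∃ l, IsAlternatingPath G z l ∧ l.length = 2 * hs.length ∧ l.head? = hs.head? ∧
      ∀ v ∈ l, v ∉ F := by
  induction hs generalizing F with
  | nil => exact ⟨[], .nil, rfl, rfl, by simp⟩
  | cons h hs ih =>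
    have hh : h ∈ h :: hs := List.mem_cons_self
    have htail {x : V} (hx : x ∈ hs) : x ∈ h :: hs := List.mem_cons_of_mem h hx
    obtain ⟨hhs, hnd⟩ := List.nodup_cons.1 hnd
    obtain ⟨hzh, hzhs⟩ := List.ne_and_not_mem_of_not_mem_cons hz
    obtain ⟨h', hh', hhead⟩ : ∃ h' ∈ h :: hs, ∀ x ∈ hs.head?, x = h' := by
      cases hs <;> simp
    obtain ⟨u, hu, hunew⟩ := Finset.exists_mem_notMem_of_card_lt_card
      (s := F ∪ hs.toFinset) (t := {u ∈ U | G.Adj h u ∧ G.Adj h' u}) <| calc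
        #(F ∪ hs.toFinset) ≤ #F + hs.length :=
          (Finset.card_union_le _ _).trans (by gcongr; exact hs.toFinset_card_le)
        _ < #F + 2 * (h :: hs).length := by rw [List.length_cons]; omega
        _ ≤ _ := hcommon h hh h' hh'
    obtain ⟨huU, hhu, hh'u⟩ := Finset.mem_filter.1 hu
    simp only [Finset.mem_union, List.mem_toFinset, not_or] at hunew
    have hcard : #(insert h (insert u F)) + 2 * hs.length ≤ #F + 2 * (h :: hs).length := by
      have hinsert := Finset.card_insert_le h (insert u F)
      have hinsert' := Finset.card_insert_le u F
      rw [List.length_cons]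
      omega
    obtain ⟨l, hl, hlen, hlhead, hlF⟩ := ih (F := insert h (insert u F)) hnd hzhs
      (fun x hx => by
        simp only [Finset.mem_insert, not_or]
        exact ⟨ne_of_mem_of_not_mem hx hhs, ne_of_mem_of_not_mem hx hunew.2, hF x (htail hx)⟩)
      (fun x hx y hy => hcard.trans (hcommon x (htail hx) y (htail hy)))
    simp only [Finset.mem_insert, not_or] at hlF
    refine ⟨h :: u :: l, hl.cons_cons (fun hm => (hlF h hm).1 rfl) (fun hm => (hlF u hm).2.1 rfl)
      hzh hhu (fun x hx => hhead x (hlhead ▸ hx) ▸ hh'u.symm) (hU u huU),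
      by simp only [List.length_cons, hlen]; omega, rfl, ?_⟩
    simpa [hF h hh, hunew.1] using fun v hv => (hlF v hv).2.2

theorem exists_isAlternatingPath {n : ℕ} {b : V} (hU : ∀ u ∈ U, G.Adj z u) (hz : z ∉ T)
    (hF : Disjoint T F) (hb : b ∈ T) (hn : 0 < n) (hnT : n ≤ #T)
    (hcommon : ∀ h ∈ T, ∀ h' ∈ T, #F + 2 * n ≤ #{u ∈ U | G.Adj h u ∧ G.Adj h' u}) :
    ∃ l, IsAlternatingPath G z l ∧ l.length = 2 * n ∧ l.head? = some b ∧ ∀ v ∈ l, v ∉ F := by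
  obtain ⟨S, hbS, hST, rfl⟩ := Finset.exists_subsuperset_card_eq
    (Finset.singleton_subset_iff.2 hb) hn hnT
  rw [Finset.singleton_subset_iff] at hbS
  have hmem {x : V} (hx : x ∈ b :: (S.erase b).toList) : x ∈ T := by
    obtain rfl | hx := List.mem_cons.1 hx
    exacts [hb, hST (Finset.mem_of_mem_erase (Finset.mem_toList.1 hx))]
  have hlen : (b :: (S.erase b).toList).length = #S := by
    simp [Finset.card_erase_add_one hbS]
  simpa only [hlen, List.head?_cons] using
    exists_isAlternatingPath_of_list (hs := b :: (S.erase b).toList) hU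
      (by simp [Finset.nodup_toList]) (fun h => hz (hmem h))
      (fun h hh => Finset.disjoint_left.1 hF (hmem hh))
      (fun h hh h' hh' => hlen ▸ hcommon h (hmem hh) h' (hmem hh'))

end AlternatingPaths

section PerronFrobenius

variable {n : Type*} [Fintype n] {A : Matrix n n ℝ} {ρ : ℝ}

theorem posSemidef_smul_one_sub (hA : A.IsHermitian)
    (hρ : ∀ μ : ℝ, (∃ x : n → ℝ, x ≠ 0 ∧ A *ᵥ x = μ • x) → μ ≤ ρ) :
    (ρ • (1 : Matrix n n ℝ) - A).PosSemidef := by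
  have hH : (ρ • (1 : Matrix n n ℝ) - A).IsHermitian :=
    (Matrix.isHermitian_one.smul (IsSelfAdjoint.all ρ)).sub hA
  refine hH.posSemidef_iff_eigenvalues_nonneg.2 fun i => ?_
  have hne : (hH.eigenvectorBasis i).ofLp ≠ 0 := fun h =>
    hH.eigenvectorBasis.orthonormal.ne_zero i (by ext j; exact congrFun h j)
  have heig : A *ᵥ (hH.eigenvectorBasis i).ofLp =
      (ρ - hH.eigenvalues i) • (hH.eigenvectorBasis i).ofLp := by
    rw [sub_smul, ← hH.mulVec_eigenvectorBasis i, Matrix.sub_mulVec, Matrix.smul_mulVec,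
      Matrix.one_mulVec, sub_sub_cancel]
  simpa using hρ _ ⟨_, hne, heig⟩

theorem mulVec_abs_eq_smul_abs (hpsd : (ρ • (1 : Matrix n n ℝ) - A).PosSemidef)
    (hA : ∀ i j, 0 ≤ A i j) {x : n → ℝ} (hx : A *ᵥ x = ρ • x) : A *ᵥ |x| = ρ • |x| := by
  have hle (i : n) : ρ * |x i| ≤ (A *ᵥ |x|) i := calc
    ρ * |x i| ≤ |ρ| * |x i| := by gcongr; exact le_abs_self ρ
    _ = |(A *ᵥ x) i| := by rw [hx, Pi.smul_apply, smul_eq_mul, abs_mul]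
    _ ≤ ∑ j, |A i j * x j| := Finset.abs_sum_le_sum_abs _ _
    _ = (A *ᵥ |x|) i := Finset.sum_congr rfl fun j _ => by
      rw [abs_mul, abs_of_nonneg (hA i j), Pi.abs_apply]
  have hmul : (ρ • (1 : Matrix n n ℝ) - A) *ᵥ |x| = ρ • |x| - A *ᵥ |x| := by
    rw [Matrix.sub_mulVec, Matrix.smul_mulVec, Matrix.one_mulVec]
  have hzero : star |x| ⬝ᵥ ((ρ • (1 : Matrix n n ℝ) - A) *ᵥ |x|) = 0 := by
    refine le_antisymm (Finset.sum_nonpos fun i _ => ?_)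
      (by simpa using hpsd.re_dotProduct_nonneg |x|)
    rw [hmul]
    exact mul_nonpos_of_nonneg_of_nonpos (abs_nonneg (x i)) (sub_nonpos.2 (hle i))
  rw [hpsd.dotProduct_mulVec_zero_iff, hmul, sub_eq_zero] at hzero
  exact hzero.symm

end PerronFrobenius

section PerronVector

variable {V : Type*} [Fintype V]

/-- A nonnegative eigenvector `y` of `G` for the eigenvalue `ρ`, scaled so that its largest entry
is `y z = 1`. -/
structure IsPerronAt (G : SimpleGraph V) (ρ : ℝ) (y : V → ℝ) (z : V) : Prop where
  nonneg : ∀ v, 0 ≤ y v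
  le_one : ∀ v, y v ≤ 1
  apply_self : y z = 1
  nbrSum_univ : ∀ v, nbrSum G y Finset.univ v = ρ * y v

theorem adjMat_mulVec_apply {V : Type} [Fintype V] (G : SimpleGraph V) (f : V → ℝ) (v : V) :
    (adjMat G *ᵥ f) v = nbrSum G f Finset.univ v := by
  simp [Matrix.mulVec, dotProduct, adjMat, nbrSum, Finset.sum_filter]

theorem isPerronAt_of_nonneg {G : SimpleGraph V} {ρ : ℝ} {x : V → ℝ} (hx : 0 ≤ x) (hx0 : x ≠ 0)
    (heig : ∀ v, nbrSum G x Finset.univ v = ρ * x v) : ∃ y z, IsPerronAt G ρ y z := by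
  obtain ⟨v, hv⟩ := Function.ne_iff.1 hx0
  obtain ⟨z, -, hz⟩ := Finset.exists_max_image Finset.univ x ⟨v, Finset.mem_univ v⟩
  have hpos : 0 < x z := ((hx v).lt_of_ne hv.symm).trans_le (hz v (Finset.mem_univ v))
  refine ⟨fun v => x v / x z, z, fun v => div_nonneg (hx v) hpos.le,
    fun v => (div_le_one hpos).2 (hz v (Finset.mem_univ v)), div_self hpos.ne', fun v => ?_⟩
  rw [nbrSum, ← Finset.sum_div, ← nbrSum, heig, mul_div_assoc]

theorem IsSpecRad.exists_isPerronAt {V : Type} [Fintype V] {G : SimpleGraph V} {ρ : ℝ}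
    (h : IsSpecRad G ρ) : ∃ y z, IsPerronAt G ρ y z := by
  obtain ⟨⟨x, hx0, hx⟩, hmax⟩ := h
  have hA : (adjMat G).IsHermitian := by
    ext u v
    simp [adjMat, G.adj_comm]
  have habs := mulVec_abs_eq_smul_abs (posSemidef_smul_one_sub hA hmax)
    (fun u v => by unfold adjMat; positivity) hx
  have hne : |x| ≠ 0 := fun h => hx0 (funext fun v => abs_eq_zero.1 (congrFun h v))
  exact isPerronAt_of_nonneg (abs_nonneg x) hne fun v => by
    rw [← adjMat_mulVec_apply, habs, Pi.smul_apply, smul_eq_mul]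

end PerronVector

section Partition

variable {V : Type*} [Fintype V] {G : SimpleGraph V} {z : V}

local notation "U" => neighborFinset G z
local notation "W" => neighborFinset Gᶜ z

theorem mem_nbrs_or_mem_compl_nbrs {v : V} (hv : v ≠ z) : v ∈ U ∨ v ∈ W := by
  rw [mem_neighborFinset, mem_neighborFinset, compl_adj]
  exact (em _).imp_right fun hzv => ⟨hv.symm, hzv⟩

variable (G z) in
theorem disjoint_nbrs_compl_nbrs : Disjoint U W :=
  Finset.disjoint_left.2 fun v hv hv' =>
    ((G.compl_adj z v).1 ((mem_neighborFinset Gᶜ z v).1 hv')).2 ((mem_neighborFinset G z v).1 hv)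

variable (G z) in
theorem sum_univ_eq_add_sum_add_sum (f : V → ℝ) :
    ∑ v, f v = f z + ∑ u ∈ U, f u + ∑ w ∈ W, f w := by
  have hunion : Finset.univ.erase z = U ∪ W := by
    ext v
    refine ⟨fun hv => Finset.mem_union.2 (mem_nbrs_or_mem_compl_nbrs (Finset.ne_of_mem_erase hv)),
      fun hv => Finset.mem_erase.2 ⟨?_, Finset.mem_univ v⟩⟩
    rintro rfl
    simp at hv
  rw [← Finset.add_sum_erase _ f (Finset.mem_univ z), hunion,
    Finset.sum_union (disjoint_nbrs_compl_nbrs G z), add_assoc]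

theorem nbrSum_univ_self (f : V → ℝ) : nbrSum G f Finset.univ z = ∑ u ∈ U, f u := by
  rw [nbrSum, ← neighborFinset_eq_filter]

theorem nbrSum_univ_eq (f : V → ℝ) (v : V) :
    nbrSum G f Finset.univ v =
      (if G.Adj v z then f z else 0) + nbrSum G f U v + nbrSum G f W v := by
  simp only [nbrSum, Finset.sum_filter]
  exact sum_univ_eq_add_sum_add_sum G z _

theorem nbrSum_univ_of_mem_nbrs (f : V → ℝ) {u : V} (hu : u ∈ U) :
    nbrSum G f Finset.univ u = f z + nbrSum G f U u + nbrSum G f W u := by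
  rw [nbrSum_univ_eq, if_pos ((mem_neighborFinset G z u).1 hu).symm]

theorem nbrSum_univ_of_mem_compl_nbrs (f : V → ℝ) {w : V} (hw : w ∈ W) :
    nbrSum G f Finset.univ w = nbrSum G f U w + nbrSum G f W w := by
  rw [nbrSum_univ_eq, if_neg, zero_add]
  exact fun h => ((G.compl_adj z w).1 ((mem_neighborFinset Gᶜ z w).1 hw)).2 h.symm

variable (G z) in
theorem two_mul_card_edgeFinset_eq :
    2 * (#G.edgeFinset : ℝ) = 2 * #U + ∑ u ∈ U, (degIn G U u : ℝ) +
      2 * ∑ w ∈ W, (degIn G U w : ℝ) + ∑ w ∈ W, (degIn G W w : ℝ) := by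
  have hdeg : 2 * (#G.edgeFinset : ℝ) = ∑ v, nbrSum G (fun _ => 1) Finset.univ v := by
    have := G.sum_degrees_eq_twice_card_edges
    simp only [← card_neighborFinset_eq_degree, neighborFinset_eq_filter] at this
    simp only [nbrSum_const, degIn, mul_one]
    exact_mod_cast this.symm
  have hcomm : ∑ u ∈ U, (degIn G W u : ℝ) = ∑ w ∈ W, (degIn G U w : ℝ) := by
    exact_mod_cast sum_degIn_comm G U W
  rw [hdeg, sum_univ_eq_add_sum_add_sum G z, nbrSum_univ_self,
    Finset.sum_congr rfl fun u hu => nbrSum_univ_of_mem_nbrs _ hu,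
    Finset.sum_congr rfl fun w hw => nbrSum_univ_of_mem_compl_nbrs _ hw]
  simp only [nbrSum_const, Finset.sum_add_distrib, mul_one, hcomm, Finset.sum_const, nsmul_eq_mul]
  ring

namespace IsPerronAt

variable {ρ : ℝ} {y : V → ℝ} (h : IsPerronAt G ρ y z)
include h

theorem sum_nbrs : ∑ u ∈ U, y u = ρ := by
  rw [← nbrSum_univ_self, h.nbrSum_univ, h.apply_self, mul_one]

theorem mul_apply_of_mem_nbrs {u : V} (hu : u ∈ U) :
    ρ * y u = 1 + nbrSum G y U u + nbrSum G y W u := by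
  rw [← h.nbrSum_univ, nbrSum_univ_of_mem_nbrs y hu, h.apply_self]

theorem mul_apply_of_mem_compl_nbrs {w : V} (hw : w ∈ W) :
    ρ * y w = nbrSum G y U w + nbrSum G y W w := by
  rw [← h.nbrSum_univ, nbrSum_univ_of_mem_compl_nbrs y hw]

theorem sq_eq : ρ ^ 2 = #U + ∑ u ∈ U, degIn G U u * y u + ∑ w ∈ W, degIn G U w * y w := by
  calc
    ρ ^ 2 = ∑ u ∈ U, ρ * y u := by rw [← Finset.mul_sum, h.sum_nbrs, sq]
    _ = ∑ u ∈ U, (1 + nbrSum G y U u + nbrSum G y W u) :=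
      Finset.sum_congr rfl fun u hu => h.mul_apply_of_mem_nbrs hu
    _ = _ := by
      simp only [Finset.sum_add_distrib, sum_nbrSum, Finset.sum_const, nsmul_eq_mul, mul_one]

theorem nbrSum_le_degIn (S : Finset V) (v : V) : nbrSum G y S v ≤ degIn G S v := by
  simpa only [nbrSum_const, mul_one] using nbrSum_mono G h.le_one S v

theorem le_card_common_nbrs (v v' : V) :
    nbrSum G y U v + nbrSum G y U v' - ρ ≤ #{u ∈ U | G.Adj v u ∧ G.Adj v' u} := by
  have hunion : ∑ u ∈ {u ∈ U | G.Adj v u} ∪ {u ∈ U | G.Adj v' u}, y u ≤ ρ :=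
    (Finset.sum_le_sum_of_subset_of_nonneg
      (Finset.union_subset (Finset.filter_subset _ _) (Finset.filter_subset _ _))
      fun u _ _ => h.nonneg u).trans_eq h.sum_nbrs
  have hinter : ∑ u ∈ U with G.Adj v u ∧ G.Adj v' u, y u ≤
      #{u ∈ U | G.Adj v u ∧ G.Adj v' u} := by
    simpa using Finset.sum_le_card_nsmul _ y 1 fun u _ => h.le_one u
  have hsum := Finset.sum_union_inter (s₁ := {u ∈ U | G.Adj v u}) (s₂ := {u ∈ U | G.Adj v' u})
    (f := y)
  rw [← Finset.filter_and] at hsum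
  rw [nbrSum, nbrSum]
  linarith

theorem pos_of_mem_nbrs {u : V} (hu : u ∈ U) : 0 < y u := by
  have happly := h.mul_apply_of_mem_nbrs hu
  have hU := nbrSum_nonneg G h.nonneg U u
  have hW := nbrSum_nonneg G h.nonneg W u
  refine (h.nonneg u).lt_of_ne fun hu => ?_
  rw [← hu, mul_zero] at happly
  linarith

theorem slack_compl_nbrs_nonneg (w : V) :
    0 ≤ (degIn G W w : ℝ) / 2 + degIn G U w * (1 - y w) :=
  add_nonneg (by positivity) (mul_nonneg (by positivity) (sub_nonneg.2 (h.le_one w)))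

end IsPerronAt

/-- The situation at a vertex `z` where the Perron vector is largest, when `G` attains the bound
on its spectral radius `ρ`. The inequality `card_edgeFinset_le` is that bound solved for the number
of edges, and `length_ne` is all that is used of the absence of theta subgraphs. -/
structure IsExtremalConfig (G : SimpleGraph V) (k : ℕ) (ρ : ℝ) (y : V → ℝ) (z : V) : Prop
    extends IsPerronAt G ρ y z where
  two_le : 2 ≤ k
  nine_mul_sq_le : 9 * (k : ℝ) ^ 2 ≤ ρ
  card_edgeFinset_le : (#G.edgeFinset : ℝ) ≤ ρ ^ 2 - (k - 1) * ρ + k * (k - 1) / 2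
  length_ne : ∀ l, IsAlternatingPath G z l → (∀ x ∈ l.head?, G.Adj z x) → l.length ≠ 2 * k

/-- The neighbours of `x` in the neighbourhood of `z` carry so large a part of the Perron vector
that any two such vertices have at least `2 * k` common neighbours there. -/
def IsHub (G : SimpleGraph V) (k : ℕ) (ρ : ℝ) (y : V → ℝ) (z x : V) : Prop :=
  ρ / 2 + k ≤ nbrSum G y (neighborFinset G z) x

namespace IsExtremalConfig

variable {k : ℕ} {ρ : ℝ} {y : V → ℝ} (h : IsExtremalConfig G k ρ y z)
include h

theorem two_le_cast : (2 : ℝ) ≤ k := by exact_mod_cast h.two_le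

theorem deficit_le :
    (∑ w ∈ W, (degIn G W w : ℝ)) / 2 + ∑ w ∈ W, degIn G U w * (1 - y w) ≤
      k * (k - 1) / 2 + ∑ u ∈ U, (degIn G U u - (k - 1)) * y u -
        (∑ u ∈ U, (degIn G U u : ℝ)) / 2 := by
  have hedge := two_mul_card_edgeFinset_eq G z
  have hle := h.card_edgeFinset_le
  have hsq := h.sq_eq
  simp only [mul_sub, sub_mul, mul_one, Finset.sum_sub_distrib, ← Finset.mul_sum, h.sum_nbrs]
  linarith

theorem sum_nbrSum_min_le_of_subset_nbrs {S : Finset V} (hS : S ⊆ U) :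
    ∑ u ∈ S, nbrSum G (fun v => min (y u) (y v)) S u ≤ 2 * (k - 1) * ∑ u ∈ S, y u := by
  refine sum_nbrSum_min_le (fun T hT => ?_) fun v _ => h.nonneg v
  have hno (l : List V) (hl : IsPathIn G T l) : l.length ≠ 2 * (k - 1) + 2 := by
    have hadj (x : V) (hx : x ∈ l) : G.Adj z x :=
      (mem_neighborFinset G z x).1 (hS (hT (hl.subset x hx)))
    rw [show 2 * (k - 1) + 2 = 2 * k by have := h.two_le; omega]
    exact h.length_ne l ⟨hl.nodup, hl.isChain, fun hz => G.irrefl (hadj z hz),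
      fun i hi _ => hadj _ (List.getElem_mem hi)⟩ fun x hx => hadj x (List.mem_of_mem_head? hx)
  have hle : ((∑ v ∈ T, degIn G T v : ℕ) : ℝ) ≤ ((2 * (k - 1) * #T : ℕ) : ℝ) :=
    Nat.cast_le.2 (sum_degIn_le_mul_card_of_no_path hno)
  rwa [Nat.cast_mul, Nat.cast_mul, Nat.cast_sub (by linarith [h.two_le]), Nat.cast_one,
    Nat.cast_two] at hle

theorem energy_bounds :
    ∑ w ∈ W, (degIn G W w : ℝ) ≤ k * (k - 1) ∧
    ∑ u ∈ U, nbrSum G (fun v => 1 - y v) W u ≤ k * (k - 1) / 2 ∧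
    ∑ u ∈ U, nbrSum G (fun v => 1 - max (y u) (y v)) U u ≤ k * (k - 1) ∧
    2 * (k - 1) * ρ - k * (k - 1) ≤ ∑ u ∈ U, nbrSum G (fun v => min (y u) (y v)) U u := by
  have hdeficit := h.deficit_le
  have hminmax := sum_nbrSum_min_add_sum_nbrSum_max G y U
  have hmin := h.sum_nbrSum_min_le_of_subset_nbrs subset_rfl
  have hW : 0 ≤ ∑ w ∈ W, (degIn G W w : ℝ) := by positivity
  have hUW : 0 ≤ ∑ u ∈ U, nbrSum G (fun v => 1 - y v) W u :=
    Finset.sum_nonneg fun u _ => nbrSum_nonneg G (fun v => sub_nonneg.2 (h.le_one v)) W u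
  have hmax : 0 ≤ ∑ u ∈ U, nbrSum G (fun v => 1 - max (y u) (y v)) U u :=
    Finset.sum_nonneg fun u _ => nbrSum_nonneg G
      (fun v => sub_nonneg.2 (max_le (h.le_one u) (h.le_one v))) U u
  rw [← sum_nbrSum] at hdeficit
  simp only [nbrSum_one_sub, sub_mul, Finset.sum_sub_distrib, ← Finset.mul_sum, h.sum_nbrs]
    at hdeficit hUW hmax hmin ⊢
  refine ⟨?_, ?_, ?_, ?_⟩ <;> linarith

theorem two_mul_le_card_common_nbrs {x x' : V} (hx : IsHub G k ρ y z x)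
    (hx' : IsHub G k ρ y z x') : 2 * k ≤ #{u ∈ U | G.Adj x u ∧ G.Adj x' u} := by
  have hcommon := h.le_card_common_nbrs x x'
  rw [IsHub] at hx hx'
  have : ((2 * k : ℕ) : ℝ) ≤ #{u ∈ U | G.Adj x u ∧ G.Adj x' u} := by
    push_cast
    linarith
  exact_mod_cast this

theorem card_hubs_add_one_le {T : Finset V} (hT : ∀ x ∈ T, IsHub G k ρ y z x) (hzT : z ∉ T)
    {b : V} (hb : b ∈ T) (hzb : G.Adj z b) : #T + 1 ≤ k := by
  by_contra! hlt
  obtain ⟨l, hl, hlen, hhead, -⟩ := exists_isAlternatingPath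
    (fun u hu => (mem_neighborFinset G z u).1 hu) hzT (Finset.disjoint_empty_right T) hb
    (by linarith [h.two_le]) (Nat.lt_succ_iff.1 hlt) fun x hx x' hx' => by
      simpa using h.two_mul_le_card_common_nbrs (hT x hx) (hT x' hx')
  exact h.length_ne l hl (by simpa [hhead] using hzb) hlen

theorem card_hubs_add_two_le {T : Finset V} (hT : ∀ x ∈ T, IsHub G k ρ y z x) (hzT : z ∉ T)
    (hTU : Disjoint T U) {w u u' : V} (hw : w ∈ T) (hu : u ∈ U) (hu' : u' ∈ U)
    (hwu : G.Adj w u) (huu' : G.Adj u u') : #T + 2 ≤ k := by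
  by_contra! hlt
  have hk := h.two_le
  have hpair : #{u', u} ≤ 2 := Finset.card_le_two
  obtain ⟨l, hl, hlen, hhead, hl'⟩ := exists_isAlternatingPath (n := k - 1)
    (fun u hu => (mem_neighborFinset G z u).1 hu) hzT
    (hTU.mono_right (Finset.insert_subset hu' (Finset.singleton_subset_iff.2 hu))) hw
    (by omega) (by omega) fun x hx x' hx' =>
      le_trans (by omega) (h.two_mul_le_card_common_nbrs (hT x hx) (hT x' hx'))
  rw [mem_neighborFinset] at hu hu'
  have hlong : IsAlternatingPath G z (u' :: u :: l) :=
    hl.cons_cons (fun hm => hl' u' hm (by simp)) (fun hm => hl' u hm (by simp)) hu'.ne huu'.symm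
      (by simpa [hhead] using hwu.symm) hu
  exact h.length_ne _ hlong (by simpa using hu') (by simp only [List.length_cons, hlen]; omega)

theorem isHub_of_mem_compl_nbrs {w : V} (hw : w ∈ W) (hyw : 3 / 4 ≤ y w) :
    IsHub G k ρ y z w := by
  have hk := h.two_le_cast
  have hρ := h.nine_mul_sq_le
  have hWw : nbrSum G y W w ≤ k * (k - 1) := calc
    nbrSum G y W w ≤ degIn G W w := h.nbrSum_le_degIn W w
    _ ≤ ∑ w ∈ W, (degIn G W w : ℝ) :=
      Finset.single_le_sum (f := fun w => (degIn G W w : ℝ)) (fun _ _ => Nat.cast_nonneg _) hw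
    _ ≤ k * (k - 1) := h.energy_bounds.1
  have happly := h.mul_apply_of_mem_compl_nbrs hw
  rw [IsHub]
  nlinarith

/-- Otherwise the edges inside `U` would all avoid the neighbours of `w`, and would be too few. -/
theorem exists_adj_adj_of_isHub {w : V} (hw : IsHub G k ρ y z w) :
    ∃ u ∈ U, ∃ u' ∈ U, G.Adj w u ∧ G.Adj u u' := by
  by_contra! hno
  have hsub : {u ∈ U | ¬ G.Adj w u} ⊆ U := Finset.filter_subset _ _
  have hsum : ∑ u ∈ U, nbrSum G (fun v => min (y u) (y v)) U u =
      ∑ u ∈ U with ¬ G.Adj w u,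
        nbrSum G (fun v => min (y u) (y v)) {u ∈ U | ¬ G.Adj w u} u := by
    rw [← Finset.sum_subset hsub fun u hu hu' => ?_]
    · refine Finset.sum_congr rfl fun u hu => ?_
      rw [nbrSum, nbrSum, Finset.filter_filter]
      refine Finset.sum_congr (Finset.filter_congr fun v hv => ?_) fun _ _ => rfl
      exact ⟨fun huv => ⟨fun hwv => hno v hv u (hsub hu) hwv huv.symm, huv⟩, And.right⟩
    · have hwu : G.Adj w u := by simpa [(mem_neighborFinset G z u).1 hu] using hu'
      exact Finset.sum_eq_zero fun v hv =>
        absurd (Finset.mem_filter.1 hv).2 (hno u hu v (Finset.mem_filter.1 hv).1 hwu)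
  have hsplit := Finset.sum_filter_add_sum_filter_not U (G.Adj w) y
  have hle := h.sum_nbrSum_min_le_of_subset_nbrs hsub
  have hge := h.energy_bounds.2.2.2
  have hk := h.two_le_cast
  have hρ := h.nine_mul_sq_le
  rw [h.sum_nbrs, ← nbrSum] at hsplit
  rw [IsHub] at hw
  nlinarith

theorem card_large_compl_nbrs_add_two_le : #(large y W) + 2 ≤ k := by
  obtain hempty | ⟨w, hw⟩ := (large y W).eq_empty_or_nonempty
  · simpa [hempty] using h.two_le
  · have hhub (x : V) (hx : x ∈ large y W) : IsHub G k ρ y z x :=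
      h.isHub_of_mem_compl_nbrs (mem_large.1 hx).1 (mem_large.1 hx).2
    obtain ⟨u, hu, u', hu', hwu, huu'⟩ := h.exists_adj_adj_of_isHub (hhub w hw)
    exact h.card_hubs_add_two_le hhub (by simp [mem_large])
      ((disjoint_nbrs_compl_nbrs G z).symm.mono_left (large_subset y _)) hw hu hu' hwu huu'

theorem nbrSum_compl_nbrs_le {u : V} (hu : u ∈ U) :
    nbrSum G y W u ≤ k - 2 + 3 * (k * (k - 1) / 2) := by
  have hC : (#(large y W) : ℝ) + 2 ≤ k := by exact_mod_cast h.card_large_compl_nbrs_add_two_le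
  have hnonneg (v : V) : 0 ≤ 1 - y v := sub_nonneg.2 (h.le_one v)
  have hrow : nbrSum G (fun v => 1 - y v) W u ≤ k * (k - 1) / 2 :=
    (Finset.single_le_sum (fun x _ => nbrSum_nonneg G hnonneg W x) hu).trans
      h.energy_bounds.2.1
  linarith [nbrSum_le_card_large_add G h.le_one hnonneg (fun v hv => by linarith) W u]

theorem nbrSum_nbrs_le {u : V} (hu : u ∈ U) (hyu : y u < 3 / 4) :
    nbrSum G y U u ≤ #(large y U) + 3 * (k * (k - 1)) := by
  have hnonneg (x v : V) : 0 ≤ 1 - max (y x) (y v) :=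
    sub_nonneg.2 (max_le (h.le_one x) (h.le_one v))
  have hrow : nbrSum G (fun v => 1 - max (y u) (y v)) U u ≤ k * (k - 1) :=
    (Finset.single_le_sum (f := fun x => nbrSum G (fun v => 1 - max (y x) (y v)) U x)
      (fun x _ => nbrSum_nonneg G (hnonneg x) U x) hu).trans h.energy_bounds.2.2.1
  linarith [nbrSum_le_card_large_add G h.le_one (hnonneg u)
    (fun v hv => by linarith [max_lt hyu hv]) U u]

theorem isHub_of_mem_nbrs {u : V} (hu : u ∈ U) (hyu : 3 / 4 ≤ y u) : IsHub G k ρ y z u := by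
  have hk := h.two_le_cast
  have hρ := h.nine_mul_sq_le
  have happly := h.mul_apply_of_mem_nbrs hu
  have hW := h.nbrSum_compl_nbrs_le hu
  rw [IsHub]
  nlinarith

theorem card_large_nbrs_add_card_large_compl_nbrs_lt (hne : (large y U).Nonempty) :
    #(large y U) + #(large y W) + 1 ≤ k := by
  obtain ⟨b, hb⟩ := hne
  rw [← Finset.card_union_of_disjoint
    ((disjoint_nbrs_compl_nbrs G z).mono (large_subset y U) (large_subset y W))]
  refine h.card_hubs_add_one_le (fun x hx => ?_) (by simp [mem_large])
    (Finset.mem_union_left _ hb) ((mem_neighborFinset G z b).1 (mem_large.1 hb).1)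
  obtain hx | hx := Finset.mem_union.1 hx
  · exact h.isHub_of_mem_nbrs (mem_large.1 hx).1 (mem_large.1 hx).2
  · exact h.isHub_of_mem_compl_nbrs (mem_large.1 hx).1 (mem_large.1 hx).2

theorem card_large_nbrs_add_one_le : #(large y U) + 1 ≤ k := by
  obtain hempty | hne := (large y U).eq_empty_or_nonempty
  · simpa [hempty] using one_le_two.trans h.two_le
  · linarith [h.card_large_nbrs_add_card_large_compl_nbrs_lt hne]

theorem apply_lt_half {u : V} (hu : u ∈ U) (hyu : y u < 3 / 4) : y u < 1 / 2 := by
  have hk := h.two_le_cast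
  have hρ := h.nine_mul_sq_le
  have hB : (#(large y U) : ℝ) + 1 ≤ k := by exact_mod_cast h.card_large_nbrs_add_one_le
  have happly := h.mul_apply_of_mem_nbrs hu
  have hU := h.nbrSum_nbrs_le hu hyu
  have hW := h.nbrSum_compl_nbrs_le hu
  nlinarith

/-- The deficit inequality with every edge charged to its ends in `B` and outside `B`. -/
theorem sum_slack_le {B : Finset V} (hB : B ⊆ U) :
    ∑ w ∈ W, ((degIn G W w : ℝ) / 2 + degIn G U w * (1 - y w)) +
      ∑ v ∈ B, ((#B - 1 - degIn G B v) / 2 + (degIn G U v - (k - 1)) * (1 - y v)) +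
      ∑ u ∈ U \ B, ((#B - degIn G B u) * y u + degIn G (U \ B) u * (1 / 2 - y u)) ≤
        (k - 1 - #B) * ((k - #B) / 2 - ρ + ∑ v ∈ B, y v) := by
  have hdeficit := h.deficit_le
  have hρ := h.sum_nbrs
  have hdeg : ∑ u ∈ U, (degIn G U u : ℝ) = ∑ v ∈ B, (degIn G B v : ℝ) +
      2 * ∑ u ∈ U \ B, (degIn G B u : ℝ) + ∑ u ∈ U \ B, (degIn G (U \ B) u : ℝ) := by
    exact_mod_cast sum_degIn_eq G hB
  have hcomm : ∑ v ∈ B, (degIn G (U \ B) v : ℝ) = ∑ u ∈ U \ B, (degIn G B u : ℝ) := by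
    exact_mod_cast sum_degIn_comm G B (U \ B)
  have hsplit (v : V) : (degIn G U v : ℝ) = degIn G B v + degIn G (U \ B) v := by
    exact_mod_cast (degIn_add_degIn_sdiff G hB v).symm
  rw [hdeg, ← Finset.sum_sdiff hB] at hdeficit
  rw [← Finset.sum_sdiff hB] at hρ
  simp only [hsplit, mul_sub, sub_mul, add_mul, mul_one, Finset.sum_sub_distrib,
    Finset.sum_add_distrib, ← Finset.mul_sum, ← Finset.sum_div, Finset.sum_const, nsmul_eq_mul,
    ← Finset.sum_mul] at hdeficit hcomm ⊢
  rw [hcomm, ← hρ]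
  linarith

theorem degIn_nbrs_ge {v : V} (hv : v ∈ large y U) : (k : ℝ) - 1 ≤ degIn G U v := by
  have hhub := h.isHub_of_mem_nbrs (mem_large.1 hv).1 (mem_large.1 hv).2
  have hρ := h.nine_mul_sq_le
  rw [IsHub] at hhub
  nlinarith [h.nbrSum_le_degIn U v]

theorem slack_large_nonneg {v : V} (hv : v ∈ large y U) :
    0 ≤ ((#(large y U) : ℝ) - 1 - degIn G (large y U) v) / 2 +
      (degIn G U v - (k - 1)) * (1 - y v) := by
  have hlt : (degIn G (large y U) v : ℝ) + 1 ≤ #(large y U) := by exact_mod_cast degIn_lt_card hv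
  have hdeg := h.degIn_nbrs_ge hv
  have hy := h.le_one v
  exact add_nonneg (by linarith) (mul_nonneg (by linarith) (by linarith))

theorem apply_lt_half_of_mem_sdiff_large {u : V} (hu : u ∈ U \ large y U) : y u < 1 / 2 := by
  obtain ⟨huU, hu⟩ := Finset.mem_sdiff.1 hu
  exact h.apply_lt_half huU (not_le.1 fun hyu => hu (mem_large.2 ⟨huU, hyu⟩))

theorem slack_sdiff_large_nonneg {u : V} (hu : u ∈ U \ large y U) :
    0 ≤ ((#(large y U) : ℝ) - degIn G (large y U) u) * y u +
      degIn G (U \ large y U) u * (1 / 2 - y u) := by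
  have hle : (degIn G (large y U) u : ℝ) ≤ #(large y U) := by exact_mod_cast degIn_le_card ..
  exact add_nonneg (mul_nonneg (sub_nonneg.2 hle) (h.nonneg u))
    (mul_nonneg (by positivity) (sub_nonneg.2 (h.apply_lt_half_of_mem_sdiff_large hu).le))

theorem card_large_nbrs_add_one : #(large y U) + 1 = k := by
  refine h.card_large_nbrs_add_one_le.eq_of_not_lt fun hlt => ?_
  have hlt : (#(large y U) : ℝ) + 1 < k := by exact_mod_cast hlt
  have hρ := h.nine_mul_sq_le
  have hB : ∑ v ∈ large y U, y v ≤ #(large y U) := by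
    simpa using Finset.sum_le_card_nsmul _ y 1 fun v _ => h.le_one v
  have hneg : ((k : ℝ) - 1 - #(large y U)) *
      ((k - #(large y U)) / 2 - ρ + ∑ v ∈ large y U, y v) < 0 :=
    mul_neg_of_pos_of_neg (by linarith) (by nlinarith [h.two_le_cast])
  linarith [h.sum_slack_le (large_subset y U),
    Finset.sum_nonneg fun w (_ : w ∈ W) => h.slack_compl_nbrs_nonneg w,
    Finset.sum_nonneg fun v hv => h.slack_large_nonneg hv,
    Finset.sum_nonneg fun u hu => h.slack_sdiff_large_nonneg hu]

theorem slack_eq_zero :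
    (∀ w ∈ W, (degIn G W w : ℝ) / 2 + degIn G U w * (1 - y w) = 0) ∧
    (∀ v ∈ large y U, ((#(large y U) : ℝ) - 1 - degIn G (large y U) v) / 2 +
      (degIn G U v - (k - 1)) * (1 - y v) = 0) ∧
    ∀ u ∈ U \ large y U, ((#(large y U) : ℝ) - degIn G (large y U) u) * y u +
      degIn G (U \ large y U) u * (1 / 2 - y u) = 0 := by
  have hW := Finset.sum_nonneg fun w (_ : w ∈ W) => h.slack_compl_nbrs_nonneg w
  have hB := Finset.sum_nonneg fun v hv => h.slack_large_nonneg hv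
  have hS := Finset.sum_nonneg fun u hu => h.slack_sdiff_large_nonneg hu
  have hslack := h.sum_slack_le (large_subset y U)
  have hcard : (k : ℝ) - 1 - #(large y U) = 0 := by
    rw [← h.card_large_nbrs_add_one]
    push_cast
    ring
  rw [hcard, zero_mul] at hslack
  refine ⟨(Finset.sum_eq_zero_iff_of_nonneg fun w _ => h.slack_compl_nbrs_nonneg w).1 ?_,
    (Finset.sum_eq_zero_iff_of_nonneg fun v hv => h.slack_large_nonneg hv).1 ?_,
    (Finset.sum_eq_zero_iff_of_nonneg fun u hu => h.slack_sdiff_large_nonneg hu).1 ?_⟩ <;>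
  linarith

theorem adj_of_mem_large {v v' : V} (hv : v ∈ large y U) (hv' : v' ∈ large y U) (hne : v' ≠ v) :
    G.Adj v v' := by
  refine adj_of_degIn_add_one_eq_card (le_antisymm (degIn_lt_card hv) ?_) hv hv' hne
  have hnonneg : 0 ≤ ((degIn G U v : ℝ) - (k - 1)) * (1 - y v) :=
    mul_nonneg (sub_nonneg.2 (h.degIn_nbrs_ge hv)) (sub_nonneg.2 (h.le_one v))
  have hle : (#(large y U) : ℝ) ≤ degIn G (large y U) v + 1 := by
    linarith [h.slack_eq_zero.2.1 v hv]
  exact_mod_cast hle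

theorem degIn_of_mem_sdiff_large {u : V} (hu : u ∈ U \ large y U) :
    degIn G (large y U) u = #(large y U) ∧ degIn G (U \ large y U) u = 0 := by
  have hpos := h.pos_of_mem_nbrs (Finset.mem_sdiff.1 hu).1
  have hhalf := sub_pos.2 (h.apply_lt_half_of_mem_sdiff_large hu)
  have hle : (degIn G (large y U) u : ℝ) ≤ #(large y U) := by exact_mod_cast degIn_le_card ..
  obtain ⟨hB, hS⟩ := (add_eq_zero_iff_of_nonneg (mul_nonneg (sub_nonneg.2 hle) hpos.le)
    (mul_nonneg (Nat.cast_nonneg _) hhalf.le)).1 (h.slack_eq_zero.2.2 u hu)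
  have hB := sub_eq_zero.1 ((mul_eq_zero_iff_right hpos.ne').1 hB)
  have hS := (mul_eq_zero_iff_right hhalf.ne').1 hS
  exact ⟨by exact_mod_cast hB.symm, by exact_mod_cast hS⟩

/-- A vertex `w` of `W` with a neighbour could only have neighbours in `U`, and `y w = 1`. It would
then be one hub too many. -/
theorem compl_nbrs_eq_empty (hiso : ∀ v, ∃ u, G.Adj v u) : W = ∅ := by
  refine Finset.eq_empty_of_forall_notMem fun w hw => ?_
  have hnonneg : 0 ≤ (degIn G U w : ℝ) * (1 - y w) :=
    mul_nonneg (Nat.cast_nonneg _) (sub_nonneg.2 (h.le_one w))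
  obtain ⟨hdeg, hy⟩ := (add_eq_zero_iff_of_nonneg (by positivity) hnonneg).1
    (h.slack_eq_zero.1 w hw)
  have hWw : degIn G W w = 0 := by simpa using hdeg
  obtain ⟨u, hwu⟩ := hiso w
  have huz : u ≠ z := by
    rintro rfl
    exact ((G.compl_adj _ _).1 ((mem_neighborFinset _ _ _).1 hw)).2 hwu.symm
  have hu : u ∈ U := (mem_nbrs_or_mem_compl_nbrs huz).resolve_right fun hu =>
    degIn_eq_zero_iff.1 hWw u hu hwu
  have hUw : degIn G U w ≠ 0 := fun h0 => degIn_eq_zero_iff.1 h0 u hu hwu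
  have hyw : 1 - y w = 0 := (mul_eq_zero.1 hy).resolve_left (Nat.cast_ne_zero.2 hUw)
  have hwlarge : 0 < #(large y W) :=
    Finset.card_pos.2 ⟨w, mem_large.2 ⟨hw, by linarith⟩⟩
  have hcard := h.card_large_nbrs_add_one
  have hk := h.two_le
  have := h.card_large_nbrs_add_card_large_compl_nbrs_lt (Finset.card_pos.1 (by omega))
  omega

theorem exists_adj_iff (hiso : ∀ v, ∃ u, G.Adj v u) :
    ∃ A : Finset V, #A = k ∧ ∀ u v, G.Adj u v ↔ u ≠ v ∧ (u ∈ A ∨ v ∈ A) := by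
  have hU {v : V} (hv : v ≠ z) : v ∈ U := (mem_nbrs_or_mem_compl_nbrs hv).resolve_right <| by
    simp [h.compl_nbrs_eq_empty hiso]
  have hzadj {v : V} (hv : v ≠ z) : G.Adj z v := (mem_neighborFinset G z v).1 (hU hv)
  have hadj {u v : V} (hu : u ∈ insert z (large y U)) (huv : u ≠ v) : G.Adj u v := by
    obtain rfl | hu := Finset.mem_insert.1 hu
    · exact hzadj huv.symm
    obtain rfl | hv := eq_or_ne v z
    · exact (hzadj huv).symm
    by_cases hvB : v ∈ large y U
    · exact h.adj_of_mem_large hu hvB huv.symm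
    · exact (degIn_eq_card_iff.1
        (h.degIn_of_mem_sdiff_large (Finset.mem_sdiff.2 ⟨hU hv, hvB⟩)).1 u hu).symm
  have hmem {v : V} (hv : v ∉ insert z (large y U)) : v ∈ U \ large y U := by
    obtain ⟨hvz, hvB⟩ := not_or.1 (mt Finset.mem_insert.2 hv)
    exact Finset.mem_sdiff.2 ⟨hU hvz, hvB⟩
  refine ⟨insert z (large y U), ?_, fun u v => ⟨fun huv => ⟨huv.ne, ?_⟩, ?_⟩⟩
  · rw [Finset.card_insert_of_notMem (by simp [mem_large]), h.card_large_nbrs_add_one]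
  · by_contra! hA
    exact degIn_eq_zero_iff.1 (h.degIn_of_mem_sdiff_large (hmem hA.1)).2 v (hmem hA.2) huv
  · rintro ⟨huv, hu | hv⟩
    exacts [hadj hu huv, (hadj hv huv.symm).symm]

end IsExtremalConfig

end Partition

section JoinStar

variable {V : Type*} [Fintype V] {G : SimpleGraph V} {A : Finset V}

theorem nonempty_iso_joinStarG (hadj : ∀ u v, G.Adj u v ↔ u ≠ v ∧ (u ∈ A ∨ v ∈ A)) :
    Nonempty (G ≃g joinStarG #A #Aᶜ) := by
  let e : V ≃ Fin #A ⊕ Fin #Aᶜ := (Equiv.sumCompl (· ∈ A)).symm.trans <|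
    A.equivFin.sumCongr <|
      (Equiv.subtypeEquivRight fun _ => Finset.mem_compl.symm).trans Aᶜ.equivFin
  have hmem (v : V) : (e v).isLeft ↔ v ∈ A := by
    by_cases hv : v ∈ A <;> simp [e, hv]
  refine ⟨⟨e, fun {u v} => ?_⟩⟩
  rw [joinStarG, fromRel_adj, e.injective.ne_iff, hmem, hmem, hadj]

theorem two_mul_card_edgeFinset_of_adj_iff
    (hadj : ∀ u v, G.Adj u v ↔ u ≠ v ∧ (u ∈ A ∨ v ∈ A)) :
    2 * (#G.edgeFinset : ℝ) = #A * (#A - 1) + 2 * (#A * #Aᶜ) := by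
  have hA (u : V) (hu : u ∈ A) : (G.degree u : ℝ) = #A - 1 + #Aᶜ := by
    have hnbrs : G.neighborFinset u = Finset.univ.erase u := by
      ext v
      simp [hadj, hu, eq_comm]
    have hcard := Finset.card_erase_add_one (Finset.mem_univ u)
    rw [Finset.card_univ, ← A.card_add_card_compl, ← hnbrs, card_neighborFinset_eq_degree] at hcard
    have : (G.degree u : ℝ) + 1 = #A + #Aᶜ := by exact_mod_cast hcard
    linarith
  have hAc (u : V) (hu : u ∈ Aᶜ) : (G.degree u : ℝ) = #A := by
    rw [Finset.mem_compl] at hu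
    have hnbrs : G.neighborFinset u = A := by
      ext v
      simp only [mem_neighborFinset, hadj, hu, false_or, and_iff_right_iff_imp]
      exact fun hv => (ne_of_mem_of_not_mem hv hu).symm
    rw [← card_neighborFinset_eq_degree, hnbrs]
  have hsum : ∑ v, (G.degree v : ℝ) = 2 * #G.edgeFinset := by
    exact_mod_cast G.sum_degrees_eq_twice_card_edges
  rw [← hsum, ← Finset.sum_add_sum_compl A, Finset.sum_congr rfl hA, Finset.sum_congr rfl hAc,
    Finset.sum_const, Finset.sum_const, nsmul_eq_mul, nsmul_eq_mul]
  ring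

end JoinStar

section SpectralBound

variable {k m ρ : ℝ}

theorem le_of_spectral_bound_le (hle : (k - 1 + √(4 * m - k ^ 2 + 1)) / 2 ≤ ρ) :
    m ≤ ρ ^ 2 - (k - 1) * ρ + k * (k - 1) / 2 := by
  have hsq := (Real.sqrt_le_iff.1 (show √(4 * m - k ^ 2 + 1) ≤ 2 * ρ - (k - 1) by linarith)).2
  linarith

theorem nine_mul_sq_le_spectral_bound (hk : 2 ≤ k) (hm : 81 * k ^ 4 ≤ m) :
    9 * k ^ 2 ≤ (k - 1 + √(4 * m - k ^ 2 + 1)) / 2 := by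
  have hsqrt : 18 * k ^ 2 - (k - 1) ≤ √(4 * m - k ^ 2 + 1) :=
    Real.le_sqrt_of_sq_le (by nlinarith [mul_nonneg (sq_nonneg k) (sub_nonneg.2 hk)])
  linarith

end SpectralBound

theorem theta_free_equality_case_general (k p q : ℕ) (hp : 2 ≤ p) (hq : 2 ≤ q)
    (hsum : p + q = 2 * k + 1)
    {V : Type} [Fintype V] (G : SimpleGraph V)
    (hfree : ¬ ContainsSub (thetaGraph p q) G)
    (m : ℕ) (hm : G.edgeSet.ncard = m)
    (hiso : ∀ v : V, (G.neighborSet v).ncard ≠ 0)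
    (hmbig : 81 * (k : ℝ) ^ 4 ≤ m)
    (ρ : ℝ) (hρ : IsSpecRad G ρ)
    (hle : ((k : ℝ) - 1 + Real.sqrt (4 * m - k ^ 2 + 1)) / 2 ≤ ρ) :
    ∃ s : ℕ, (s : ℝ) = (m : ℝ) / k - ((k : ℝ) - 1) / 2 ∧
      Nonempty (G ≃g joinStarG k s) := by
  have hk : 2 ≤ k := by omega
  have hkR : (2 : ℝ) ≤ k := by exact_mod_cast hk
  have hcard : #G.edgeFinset = m := by rw [← hm, Set.ncard_eq_toFinset_card', edgeFinset]
  obtain ⟨y, z, hy⟩ := hρ.exists_isPerronAt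
  have hconfig : IsExtremalConfig G k ρ y z :=
    { hy with
      two_le := hk
      nine_mul_sq_le := (nine_mul_sq_le_spectral_bound hkR hmbig).trans hle
      card_edgeFinset_le := hcard ▸ le_of_spectral_bound_le hle
      length_ne := fun l hl hhead hlen =>
        hfree (hl.containsSub_thetaGraph hhead hlen hp hq hsum) }
  obtain ⟨A, rfl, hadj⟩ := hconfig.exists_adj_iff fun v => Set.nonempty_of_ncard_ne_zero (hiso v)
  refine ⟨#Aᶜ, ?_, nonempty_iso_joinStarG hadj⟩
  have hedges := two_mul_card_edgeFinset_of_adj_iff hadj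
  rw [hcard] at hedges
  field_simp
  linarith

/-- for `k ≥ 3`, `q ≥ p ≥ 3`, `p + q = 2k + 1` and
`m ≥ (9/4)k⁶ + 6k⁵ + 46k⁴ + 56k³ + 196k²`, if a `θ(1,p,q)`-free graph `G` with `m` edges
and no isolated vertices satisfies `ρ(G) = (k - 1 + √(4m - k² + 1))/2`, then
`G ≅ K_k ∨ (m/k - (k-1)/2)·K₁`. -/
theorem theta_free_equality_case (k p q : ℕ) (hk : 3 ≤ k) (hp : 3 ≤ p) (hpq : p ≤ q)
    (hsum : p + q = 2 * k + 1)
    {V : Type} [Fintype V] (G : SimpleGraph V)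
    (hfree : ¬ ContainsSub (thetaGraph p q) G)
    (m : ℕ) (hm : G.edgeSet.ncard = m)
    (hiso : ∀ v : V, (G.neighborSet v).ncard ≠ 0)
    (hmbig : (9 / 4 : ℝ) * k ^ 6 + 6 * k ^ 5 + 46 * k ^ 4 + 56 * k ^ 3 + 196 * k ^ 2 ≤ m)
    (ρ : ℝ) (hρ : IsSpecRad G ρ)
    (heq : ρ = ((k : ℝ) - 1 + Real.sqrt (4 * m - k ^ 2 + 1)) / 2) :
    ∃ s : ℕ, (s : ℝ) = (m : ℝ) / k - ((k : ℝ) - 1) / 2 ∧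
      Nonempty (G ≃g joinStarG k s) := by
  have hkR : (3 : ℝ) ≤ k := by exact_mod_cast hk
  refine theta_free_equality_case_general k p q (by omega) (by omega) hsum G hfree m hm hiso
    (le_trans ?_ hmbig) ρ hρ heq.ge
  have hlead : 35 * (k : ℝ) ^ 4 ≤ (9 / 4 : ℝ) * k ^ 6 + 6 * k ^ 5 := calc
    35 * (k : ℝ) ^ 4 ≤ ((9 / 4 : ℝ) * 3 ^ 2 + 6 * 3) * k ^ 4 := by gcongr; norm_num
    _ ≤ ((9 / 4 : ℝ) * k ^ 2 + 6 * k) * k ^ 4 := by gcongr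
    _ = (9 / 4 : ℝ) * k ^ 6 + 6 * k ^ 5 := by ring
  have hrest : 0 ≤ 56 * (k : ℝ) ^ 3 + 196 * k ^ 2 := by positivity
  linarith
end
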